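/- arXiv:2404.03644 — 5 statements merged into one kernel-verified Lean document; each statement's English description precedes it below -/
import Mathlib

section
/- There exists a universal constant C > 0 with the following property. Let r ∈ (0, 1], δ ∈ (0, r], and let (a_k)_{k≥0} be a sequence of complex numbers such that the series Σ_{k=0}^∞ a_k x^k converges absolutely for all x ∈ [−r−δ, r+δ]; let f(x) = Σ_{k=0}^∞ a_k x^k on this interval. Let B > 0 satisfy B ≥ Σ_{k=0}^∞ |a_k|(r+δ)^k, and let ε ∈ (0, 3B/2). Then there exists a polynomial P with complex coefficients of degree at most C·(1/δ)·log(12B/ε) such that sup_{x ∈ [−r, r]} |f(x) − P(x)| ≤ ε and sup_{x ∈ [−1, 1]} |P(x)| ≤ ε + sup_{x ∈ [−r−δ/2, r+δ/2]} |f(x)|. -/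
/-!
Let `K ≥ 0` be a polynomial that acts as an approximate identity at scale `η = δ / 4`. Blend the
Taylor polynomials `T_y` of `f`, of degree less than `2m`, at the centres `y` within `η` of
`[-r, r]`:
`P(x) = ∫ K(x - y) T_y(x) dy`.
Since `f` is holomorphic and bounded by `B` on the disc of radius `2η` about each centre, Cauchy's
estimates bound `T_y(x) - f(x)` for `|x - y| ≤ η`, and `T_y(x)` itself for `|x - y| ≥ η`, by
`2 B (|x - y| / η) ^ (2m)`. So the single moment bound `∫ K(z) (z / η) ^ (2m) dz ≤ 4⁻ᵐ` makes `P`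
close to `f` on `[-r, r]`, close to a multiple `μ(x) f(x)` with `0 ≤ μ(x) ≤ 1` within `2η` of that
interval, and small further away; with `m` of order `log (B / ε)` all errors are at most `ε`.
The kernel is a normalized even power, with exponent of order `m`, of a Dirichlet kernel of degree
of order `1 / δ`, and `P` is a polynomial of degree at most `deg K + 2m`.
-/

open MeasureTheory Metric Polynomial Set

/-- The normalized Dirichlet kernel `sin ((2k+1)φ) / ((2k+1) sin φ)` as a polynomial in
`z = sin φ`: an even polynomial of degree `2k` with a peak of height `1` and width of order `1/k`
at the origin. -/
noncomputable def dirichletPeak (k : ℕ) : ℝ[X] :=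
  C (2 * k + 1 : ℝ)⁻¹ *
    (1 + 2 * ∑ j ∈ Finset.range k, (Chebyshev.T ℝ (j + 1)).comp (1 - 2 * X ^ 2))

lemma natDegree_dirichletPeak_le (k : ℕ) : (dirichletPeak k).natDegree ≤ 2 * k := by
  have hquad : (1 - 2 * X ^ 2 : ℝ[X]).natDegree ≤ 2 := by compute_degree
  have hsum : (∑ j ∈ Finset.range k,
      (Chebyshev.T ℝ (j + 1)).comp (1 - 2 * X ^ 2)).natDegree ≤ 2 * k := by
    refine natDegree_sum_le_of_forall_le _ _ fun j hj => ?_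
    have hdeg : (Chebyshev.T ℝ (j + 1)).natDegree = j + 1 := by
      rw [Chebyshev.natDegree_T]; omega
    have := Finset.mem_range.mp hj
    rw [natDegree_comp, hdeg]
    nlinarith
  refine (natDegree_C_mul_le _ _).trans ((natDegree_add_le _ _).trans (max_le (by simp) ?_))
  exact (natDegree_C_mul_le (2 : ℝ) _).trans hsum

lemma eval_sin_dirichletPeak (k : ℕ) (φ : ℝ) :
    (dirichletPeak k).eval (Real.sin φ) =
      (2 * k + 1 : ℝ)⁻¹ * (1 + 2 * ∑ j ∈ Finset.range k, Real.cos (2 * (j + 1) * φ)) := by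
  have hcos : 1 - 2 * Real.sin φ ^ 2 = Real.cos (2 * φ) := by
    rw [Real.cos_two_mul, Real.cos_sq']; ring
  simp only [dirichletPeak, eval_mul, eval_C, eval_add, eval_one, eval_ofNat, eval_finsetSum,
    eval_comp, eval_sub, eval_pow, eval_X, hcos, Chebyshev.T_real_cos]
  congr! 5
  push_cast
  ring

lemma one_add_two_mul_sum_cos_mul_sin (k : ℕ) (φ : ℝ) :
    (1 + 2 * ∑ j ∈ Finset.range k, Real.cos (2 * (j + 1) * φ)) * Real.sin φ =
      Real.sin ((2 * k + 1) * φ) := by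
  induction k with
  | zero => simp
  | succ k ih =>
    have hangle : 2 * Real.cos (2 * (k + 1) * φ) * Real.sin φ =
        Real.sin ((2 * (k + 1 : ℕ) + 1) * φ) - Real.sin ((2 * k + 1) * φ) := by
      rw [Real.sin_sub_sin]
      push_cast
      ring_nf
    rw [Finset.sum_range_succ]
    linear_combination ih + hangle

lemma abs_eval_dirichletPeak_le_one (k : ℕ) {z : ℝ} (hz : |z| ≤ 1) :
    |(dirichletPeak k).eval z| ≤ 1 := by
  obtain ⟨φ, rfl⟩ : ∃ φ, Real.sin φ = z :=
    ⟨_, Real.sin_arcsin (abs_le.mp hz).1 (abs_le.mp hz).2⟩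
  rw [eval_sin_dirichletPeak, abs_mul, abs_inv,
    abs_of_pos (by positivity : (0 : ℝ) < 2 * k + 1), inv_mul_le_one₀ (by positivity)]
  calc _ ≤ |(1 : ℝ)| + 2 * ∑ j ∈ Finset.range k, |Real.cos (2 * (j + 1) * φ)| := by
        grw [abs_add_le, abs_mul, abs_two, Finset.abs_sum_le_sum_abs]
    _ ≤ 1 + 2 * ∑ j ∈ Finset.range k, 1 := by
        gcongr <;> simp [Real.abs_cos_le_one]
    _ = 2 * k + 1 := by simp; ring

lemma abs_mul_eval_dirichletPeak_le_one (k : ℕ) {z : ℝ} (hz : |z| ≤ 1) :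
    |(2 * k + 1) * z * (dirichletPeak k).eval z| ≤ 1 := by
  obtain ⟨φ, rfl⟩ : ∃ φ, Real.sin φ = z :=
    ⟨_, Real.sin_arcsin (abs_le.mp hz).1 (abs_le.mp hz).2⟩
  rw [eval_sin_dirichletPeak, mul_right_comm, mul_inv_cancel_left₀ (by positivity),
    one_add_two_mul_sum_cos_mul_sin]
  exact Real.abs_sin_le_one _

lemma half_le_eval_dirichletPeak (k : ℕ) {z : ℝ} (hz : (2 * k + 1) * |z| ≤ 1 / 2) :
    1 / 2 ≤ (dirichletPeak k).eval z := by
  have hz' : |z| ≤ 1 := by nlinarith [abs_nonneg z, (Nat.cast_nonneg k : (0 : ℝ) ≤ k)]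
  obtain ⟨hz₁, hz₂⟩ := abs_le.mp hz'
  have hφ : |Real.arcsin z| ≤ 2 * |z| := by
    have := Real.mul_abs_le_abs_sin
      (abs_le.mpr ⟨Real.neg_pi_div_two_le_arcsin z, Real.arcsin_le_pi_div_two z⟩)
    rw [Real.sin_arcsin hz₁ hz₂, div_mul_eq_mul_div, div_le_iff₀ Real.pi_pos] at this
    nlinarith [Real.pi_lt_four, abs_nonneg z]
  rw [← Real.sin_arcsin hz₁ hz₂, eval_sin_dirichletPeak, le_inv_mul_iff₀ (by positivity)]
  have hcos : ∀ j ∈ Finset.range k, 1 / 2 ≤ Real.cos (2 * (j + 1) * Real.arcsin z) := by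
    intro j hj
    have hj' : (j : ℝ) + 1 ≤ k := by exact_mod_cast Finset.mem_range.mp hj
    have hangle : |2 * (j + 1) * Real.arcsin z| ≤ 1 := by
      rw [abs_mul, abs_of_pos (by positivity : (0 : ℝ) < 2 * (j + 1))]
      calc 2 * (j + 1) * |Real.arcsin z| ≤ 2 * k * (2 * |z|) := by gcongr
        _ ≤ 1 := by linarith [abs_nonneg z]
    linarith [Real.one_sub_sq_div_two_le_cos (x := 2 * (j + 1) * Real.arcsin z),
      (sq_le_one_iff_abs_le_one _).mpr hangle]
  have := Finset.card_nsmul_le_sum _ _ _ hcos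
  rw [Finset.card_range, nsmul_eq_mul] at this
  linarith

lemma eval_dirichletPeak_sq_le (k : ℕ) {z : ℝ} (hz : |z| ≤ 1) :
    (dirichletPeak k).eval z ^ 2 ≤ 2 * (1 + ((2 * k + 1) * z) ^ 2)⁻¹ := by
  have h₁ := (sq_le_one_iff_abs_le_one _).mpr (abs_eval_dirichletPeak_le_one k hz)
  have h₂ := (sq_le_one_iff_abs_le_one _).mpr (abs_mul_eval_dirichletPeak_le_one k hz)
  rw [← div_eq_mul_inv, le_div_iff₀ (by positivity)]
  linarith

lemma le_integral_dirichletPeak_pow (k p : ℕ) :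
    (2 * k + 1 : ℝ)⁻¹ * (1 / 4) ^ p ≤
      ∫ z in (-1 : ℝ)..1, ((dirichletPeak k).eval z ^ 2) ^ p := by
  set h : ℝ := (2 * (2 * k + 1 : ℝ))⁻¹ with h_def
  have hpos : 0 < h := by positivity
  have h_le_one : h ≤ 1 := inv_le_one_of_one_le₀ (by linarith [(Nat.cast_nonneg k : (0 : ℝ) ≤ k)])
  have hcont : Continuous fun z : ℝ => ((dirichletPeak k).eval z ^ 2) ^ p := by fun_prop
  calc _ = ∫ _ in (-h)..h, (1 / 4 : ℝ) ^ p := by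
        rw [intervalIntegral.integral_const, smul_eq_mul, h_def]
        field_simp
        norm_num
    _ ≤ ∫ z in (-h)..h, ((dirichletPeak k).eval z ^ 2) ^ p := by
        refine intervalIntegral.integral_mono_on (by linarith)
          intervalIntegrable_const (hcont.intervalIntegrable _ _) fun z hz => ?_
        have hz' : (2 * k + 1) * |z| ≤ 1 / 2 := by
          grw [abs_le.mpr hz, h_def]
          field_simp
          rfl
        have := half_le_eval_dirichletPeak k hz'
        gcongr
        nlinarith
    _ ≤ ∫ z in (-1 : ℝ)..1, ((dirichletPeak k).eval z ^ 2) ^ p :=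
        intervalIntegral.integral_mono_interval (by linarith) (by linarith) h_le_one
          (.of_forall fun z => by positivity) (hcont.intervalIntegrable _ _)

lemma integral_dirichletPeak_sq_le (k : ℕ) :
    ∫ z in (-1 : ℝ)..1, (dirichletPeak k).eval z ^ 2 ≤ 2 * Real.pi * (2 * k + 1 : ℝ)⁻¹ := by
  set n : ℝ := 2 * k + 1
  have hn : 0 < n := by positivity
  calc _ ≤ ∫ z in (-1 : ℝ)..1, 2 * (1 + (n * z) ^ 2)⁻¹ := by
        refine intervalIntegral.integral_mono_on (by norm_num)
          (Continuous.intervalIntegrable (by fun_prop) _ _)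
          (Continuous.intervalIntegrable (by fun_prop (disch := intros; positivity)) _ _)
          fun z hz => eval_dirichletPeak_sq_le k (abs_le.mpr hz)
    _ = 2 * (n⁻¹ * (Real.arctan n - Real.arctan (-n))) := by
        rw [intervalIntegral.integral_const_mul,
          intervalIntegral.integral_comp_mul_left (fun u => (1 + u ^ 2)⁻¹) hn.ne',
          integral_inv_one_add_sq, smul_eq_mul, mul_one, mul_neg_one]
    _ ≤ 2 * (n⁻¹ * (Real.pi / 2 + Real.pi / 2)) := by
        rw [Real.arctan_neg, sub_neg_eq_add]
        gcongr <;> exact (Real.arctan_lt_pi_div_two n).le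
    _ = 2 * Real.pi * n⁻¹ := by ring

lemma integral_dirichletPeak_pow_mul_pow_le (k m : ℕ) :
    ∫ z in (-1 : ℝ)..1, ((dirichletPeak k).eval z ^ 2) ^ (m + 1) * ((2 * k + 1) * z) ^ (2 * m) ≤
      2 * Real.pi * (2 * k + 1 : ℝ)⁻¹ := by
  refine le_trans ?_ (integral_dirichletPeak_sq_le k)
  refine intervalIntegral.integral_mono_on (by norm_num)
    (Continuous.intervalIntegrable (by fun_prop) _ _)
    (Continuous.intervalIntegrable (by fun_prop) _ _) fun z hz => ?_
  have hle : (((2 * k + 1) * z * (dirichletPeak k).eval z) ^ 2) ^ m ≤ 1 :=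
    pow_le_one₀ (sq_nonneg _)
      ((sq_le_one_iff_abs_le_one _).mpr (abs_mul_eval_dirichletPeak_le_one k (abs_le.mpr hz)))
  calc _ = (dirichletPeak k).eval z ^ 2 *
        (((2 * k + 1) * z * (dirichletPeak k).eval z) ^ 2) ^ m := by
        rw [pow_mul, mul_pow _ (eval z _), mul_pow _ (_ ^ 2)]; ring
    _ ≤ _ := mul_le_of_le_one_right (sq_nonneg _) hle

/-- A polynomial acting as an approximate identity at scale `η` on `[-R, R]`: a probability
density whose `2m`-th moment, with `η` as unit of length, is at most `4⁻ᵐ`. -/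
structure IsLocalizedKernel (K : ℝ[X]) (R η : ℝ) (m : ℕ) : Prop where
  nonneg : ∀ z, 0 ≤ K.eval z
  integral_eq_one : ∫ z in (-R)..R, K.eval z = 1
  moment_le : ∫ z in (-R)..R, K.eval z * (z / η) ^ (2 * m) ≤ (1 / 4) ^ m

/-- The even power `D(z / R) ^ (2 (m + 1))` of the Dirichlet peak `D`, normalized to have mass `1` on
`[-R, R]`. -/
noncomputable def peakKernel (R : ℝ) (k m : ℕ) : ℝ[X] :=
  C (R * ∫ u in (-1 : ℝ)..1, ((dirichletPeak k).eval u ^ 2) ^ (m + 1))⁻¹ *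
    ((dirichletPeak k ^ 2) ^ (m + 1)).comp (C R⁻¹ * X)

lemma eval_peakKernel (R : ℝ) (k m : ℕ) (z : ℝ) :
    (peakKernel R k m).eval z =
      (R * ∫ u in (-1 : ℝ)..1, ((dirichletPeak k).eval u ^ 2) ^ (m + 1))⁻¹ *
        ((dirichletPeak k).eval (z / R) ^ 2) ^ (m + 1) := by
  simp [peakKernel, eval_comp, div_eq_inv_mul]

lemma natDegree_peakKernel_le (R : ℝ) (k m : ℕ) :
    (peakKernel R k m).natDegree ≤ 4 * k * (m + 1) := by
  refine (natDegree_C_mul_le _ _).trans ?_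
  rw [natDegree_comp, natDegree_pow, natDegree_pow]
  calc _ ≤ (m + 1) * (2 * (2 * k)) * 1 := by
        gcongr
        · exact natDegree_dirichletPeak_le k
        · exact natDegree_C_mul_le _ _ |>.trans natDegree_X_le
    _ = 4 * k * (m + 1) := by ring

lemma integral_peakKernel_mul_pow {R : ℝ} (hR : 0 < R) (k m p : ℕ) (c : ℝ) :
    ∫ z in (-R)..R, (peakKernel R k m).eval z * (c * (z / R)) ^ p =
      (∫ u in (-1 : ℝ)..1, ((dirichletPeak k).eval u ^ 2) ^ (m + 1))⁻¹ *
        ∫ u in (-1 : ℝ)..1, ((dirichletPeak k).eval u ^ 2) ^ (m + 1) * (c * u) ^ p := by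
  simp_rw [eval_peakKernel, mul_assoc]
  rw [intervalIntegral.integral_const_mul, intervalIntegral.integral_comp_div
    (fun u => ((dirichletPeak k).eval u ^ 2) ^ (m + 1) * (c * u) ^ p) hR.ne', neg_div,
    div_self hR.ne', smul_eq_mul, mul_inv]
  field_simp

lemma integral_peakKernel {R : ℝ} (hR : 0 < R) (k m : ℕ) :
    ∫ z in (-R)..R, (peakKernel R k m).eval z = 1 := by
  have hpos : 0 < ∫ u in (-1 : ℝ)..1, ((dirichletPeak k).eval u ^ 2) ^ (m + 1) :=
    lt_of_lt_of_le (by positivity) (le_integral_dirichletPeak_pow k (m + 1))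
  have := integral_peakKernel_mul_pow hR k m 0 1
  simp only [pow_zero, mul_one] at this
  rw [this, inv_mul_cancel₀ hpos.ne']

lemma integral_peakKernel_mul_pow_le {R : ℝ} (hR : 0 < R) (k m : ℕ) :
    ∫ z in (-R)..R, (peakKernel R k m).eval z * ((2 * k + 1) * (z / R)) ^ (2 * m) ≤
      8 * Real.pi * 4 ^ m := by
  rw [integral_peakKernel_mul_pow hR]
  calc _ ≤ ((2 * k + 1 : ℝ)⁻¹ * (1 / 4) ^ (m + 1))⁻¹ * (2 * Real.pi * (2 * k + 1 : ℝ)⁻¹) := by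
        gcongr
        · exact intervalIntegral.integral_nonneg (by norm_num) fun u _ => by
            have := (even_two_mul m).pow_nonneg ((2 * k + 1) * u)
            positivity
        · exact le_integral_dirichletPeak_pow k (m + 1)
        · exact integral_dirichletPeak_pow_mul_pow_le k m
    _ = 8 * Real.pi * 4 ^ m := by
        rw [one_div_pow]
        field_simp
        ring

lemma isLocalizedKernel_peakKernel {R η : ℝ} {k m : ℕ} (hR : 0 < R) (hη : 0 < η) (hm : m ≠ 0)
    (hk : 12 * (R / η) ≤ k) : IsLocalizedKernel (peakKernel R k m) R η m := by
  refine ⟨fun z => ?_, integral_peakKernel hR k m, ?_⟩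
  · have := intervalIntegral.integral_nonneg (μ := volume) (by norm_num : (-1 : ℝ) ≤ 1)
      fun u _ => pow_nonneg (sq_nonneg ((dirichletPeak k).eval u)) (m + 1)
    rw [eval_peakKernel]
    positivity
  set n : ℝ := 2 * k + 1
  have hn : 0 < n := by positivity
  have hratio : R / (η * n) ≤ 1 / 24 := by
    rw [div_le_iff₀ (by positivity)]
    rw [← mul_div_assoc, div_le_iff₀ hη] at hk
    simp only [n]
    nlinarith
  have hunits (z : ℝ) : z / η = R / (η * n) * (n * (z / R)) := by field_simp
  calc ∫ z in (-R)..R, (peakKernel R k m).eval z * (z / η) ^ (2 * m)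
      = (R / (η * n)) ^ (2 * m) *
          ∫ z in (-R)..R, (peakKernel R k m).eval z * (n * (z / R)) ^ (2 * m) := by
        simp_rw [hunits, mul_pow (R / (η * n)), mul_left_comm (eval _ _)]
        exact intervalIntegral.integral_const_mul _ _
    _ ≤ (R / (η * n)) ^ (2 * m) * (36 ^ m * 4 ^ m) := by
        gcongr
        refine (integral_peakKernel_mul_pow_le hR k m).trans ?_
        gcongr
        calc 8 * Real.pi ≤ 36 := by linarith [Real.pi_lt_four]
          _ ≤ 36 ^ m := le_self_pow₀ (by norm_num) hm
    _ ≤ (1 / 24) ^ (2 * m) * (36 ^ m * 4 ^ m) := by gcongr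
    _ = (1 / 4) ^ m := by
        rw [pow_mul, ← mul_pow, ← mul_pow]
        norm_num

lemma exists_polynomial_eval_eq_integral {α 𝕜 : Type*} [MeasurableSpace α] [RCLike 𝕜]
    {μ : Measure α} {F : α → 𝕜[X]} {n : ℕ} (hdeg : ∀ y, (F y).natDegree ≤ n)
    (hint : ∀ z, Integrable (fun y => (F y).eval z) μ) :
    ∃ P : 𝕜[X], P.natDegree ≤ n ∧ ∀ z, P.eval z = ∫ y, (F y).eval z ∂μ := by
  let s := Finset.range (n + 1)
  let v : ℕ → 𝕜 := Nat.cast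
  have hv : InjOn v s := Nat.cast_injective.injOn
  have hdegree_lt (Q : 𝕜[X]) : Q.natDegree ≤ n ↔ Q.degree < s.card := by
    rw [Finset.card_range, natDegree_le_iff_degree_le, degree_lt_iff_coeff_zero,
      degree_le_iff_coeff_zero]
    simp
  have hinterp (y : α) (z : 𝕜) : (F y).eval z =
      ∑ i ∈ s, (F y).eval (v i) * (Lagrange.basis s v i).eval z := by
    conv_lhs => rw [Lagrange.eq_interpolate hv ((hdegree_lt _).mp (hdeg y))]
    simp [Lagrange.interpolate_apply, eval_finsetSum]
  refine ⟨Lagrange.interpolate s v fun i => ∫ y, (F y).eval (v i) ∂μ,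
    (hdegree_lt _).mpr (Lagrange.degree_interpolate_lt _ hv), fun z => ?_⟩
  calc _ = ∑ i ∈ s, ∫ y, (F y).eval (v i) * (Lagrange.basis s v i).eval z ∂μ := by
        simp [Lagrange.interpolate_apply, eval_finsetSum, integral_mul_const]
    _ = ∫ y, ∑ i ∈ s, (F y).eval (v i) * (Lagrange.basis s v i).eval z ∂μ :=
        (integral_finsetSum _ fun i _ => (hint (v i)).mul_const _).symm
    _ = ∫ y, (F y).eval z ∂μ := by simp only [hinterp _ z]

/-- The Taylor polynomial of `f` at `c` with the `M` terms of degree less than `M`. -/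
noncomputable def taylorPolynomial (f : ℂ → ℂ) (M : ℕ) (c : ℂ) : ℂ[X] :=
  ∑ i ∈ Finset.range M, C ((i.factorial : ℂ)⁻¹ * iteratedDeriv i f c) * (X - C c) ^ i

lemma eval_taylorPolynomial (f : ℂ → ℂ) (M : ℕ) (c z : ℂ) :
    (taylorPolynomial f M c).eval z =
      ∑ i ∈ Finset.range M, (i.factorial : ℂ)⁻¹ * iteratedDeriv i f c * (z - c) ^ i := by
  simp [taylorPolynomial, eval_finsetSum]

lemma natDegree_taylorPolynomial_le (f : ℂ → ℂ) (M : ℕ) (c : ℂ) :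
    (taylorPolynomial f M c).natDegree ≤ M := by
  refine natDegree_sum_le_of_forall_le _ _ fun i hi => (natDegree_C_mul_le _ _).trans ?_
  rw [natDegree_pow, natDegree_X_sub_C, mul_one]
  exact (Finset.mem_range.mp hi).le

lemma continuousOn_eval_taylorPolynomial {f : ℂ → ℂ} {U : Set ℂ} (hU : IsOpen U)
    (hf : DifferentiableOn ℂ f U) (M : ℕ) (z : ℂ) :
    ContinuousOn (fun c => (taylorPolynomial f M c).eval z) U := by
  have hderiv (i : ℕ) : ContinuousOn (iteratedDeriv i f) U := by
    rw [iteratedDeriv_eq_iterate]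
    exact ((hf.analyticOnNhd hU).iterated_deriv i).continuousOn
  simp_rw [eval_taylorPolynomial]
  fun_prop

section Cauchy

variable {f : ℂ → ℂ} {c z : ℂ} {B η : ℝ} {M : ℕ}

lemma norm_taylor_term_le (hη : 0 < η) (hf : DiffContOnCl ℂ f (ball c (2 * η)))
    (hB : ∀ w ∈ sphere c (2 * η), ‖f w‖ ≤ B) (i : ℕ) :
    ‖(i.factorial : ℂ)⁻¹ * iteratedDeriv i f c * (z - c) ^ i‖ ≤
      B * (‖z - c‖ / η) ^ i * (1 / 2) ^ i := by
  have hcauchy :=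
    Complex.norm_iteratedDeriv_le_of_forall_mem_sphere_norm_le i (by positivity) hf hB
  rw [norm_mul, norm_mul, norm_inv, norm_pow, Complex.norm_natCast]
  calc _ ≤ (i.factorial : ℝ)⁻¹ * (i.factorial * B / (2 * η) ^ i) * ‖z - c‖ ^ i := by gcongr
    _ = B * (‖z - c‖ / η) ^ i * (1 / 2) ^ i := by
      rw [mul_pow, div_pow, one_div_pow]
      field_simp

lemma norm_eval_taylorPolynomial_le (hη : 0 < η) (hf : DiffContOnCl ℂ f (ball c (2 * η)))
    (hB : ∀ w ∈ sphere c (2 * η), ‖f w‖ ≤ B) (hB₀ : 0 ≤ B) (hz : η ≤ ‖z - c‖) :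
    ‖(taylorPolynomial f M c).eval z‖ ≤ 2 * B * (‖z - c‖ / η) ^ M := by
  rw [eval_taylorPolynomial]
  calc _ ≤ ∑ i ∈ Finset.range M, B * (‖z - c‖ / η) ^ M * (1 / 2) ^ i := by
        refine norm_sum_le_of_le _ fun i hi => (norm_taylor_term_le hη hf hB i).trans ?_
        gcongr
        · exact (one_le_div₀ hη).mpr hz
        · exact (Finset.mem_range.mp hi).le
    _ ≤ B * (‖z - c‖ / η) ^ M * 2 := by
        rw [← Finset.mul_sum]
        gcongr
        exact sum_geometric_two_le M
    _ = _ := by ring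

lemma norm_sub_eval_taylorPolynomial_le (hη : 0 < η) (hf : DiffContOnCl ℂ f (ball c (2 * η)))
    (hB : ∀ w ∈ sphere c (2 * η), ‖f w‖ ≤ B) (hB₀ : 0 ≤ B) (hz : ‖z - c‖ ≤ η) :
    ‖f z - (taylorPolynomial f M c).eval z‖ ≤ 2 * B * (‖z - c‖ / η) ^ M := by
  have htaylor : HasSum (fun i => (i.factorial : ℂ)⁻¹ * iteratedDeriv i f c * (z - c) ^ i)
      (f z) := by
    have hz' : z ∈ ball c (2 * η) := by rw [mem_ball_iff_norm]; linarith
    refine (Complex.hasSum_taylorSeries_on_ball hf.differentiableOn hz').congr_fun fun i => ?_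
    rw [smul_eq_mul, smul_eq_mul, mul_assoc, mul_comm (iteratedDeriv i f c)]
  rw [eval_taylorPolynomial]
  refine ((hasSum_nat_add_iff' M).mpr htaylor).norm_le_of_bounded
    (g := fun i => B * (‖z - c‖ / η) ^ M * (1 / 2) ^ i) ?_ fun i => ?_
  · rw [show 2 * B * (‖z - c‖ / η) ^ M = B * (‖z - c‖ / η) ^ M * 2 by ring]
    exact hasSum_geometric_two.mul_left _
  · refine (norm_taylor_term_le hη hf hB _).trans ?_
    have hratio : ‖z - c‖ / η ≤ 1 := (div_le_one₀ hη).mpr hz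
    gcongr ?_ * ?_ * ?_
    · exact pow_le_pow_of_le_one (by positivity) hratio (Nat.le_add_left _ _)
    · exact pow_le_pow_of_le_one (by norm_num) (by norm_num) (Nat.le_add_right _ _)

lemma norm_sub_eval_taylorPolynomial_le_of_norm_le (hη : 0 < η)
    (hf : DiffContOnCl ℂ f (ball c (2 * η))) (hB : ∀ w ∈ sphere c (2 * η), ‖f w‖ ≤ B)
    (hz : ‖f z‖ ≤ B) :
    ‖(taylorPolynomial f M c).eval z - f z‖ ≤ 3 * B * (‖z - c‖ / η) ^ M := by
  have hB₀ : 0 ≤ B := (norm_nonneg _).trans hz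
  rcases le_total ‖z - c‖ η with hnear | hfar
  · rw [norm_sub_rev]
    refine (norm_sub_eval_taylorPolynomial_le hη hf hB hB₀ hnear).trans ?_
    gcongr
    norm_num
  · have hone : 1 ≤ (‖z - c‖ / η) ^ M := one_le_pow₀ ((one_le_div₀ hη).mpr hfar)
    calc _ ≤ 2 * B * (‖z - c‖ / η) ^ M + B * 1 := by
          grw [norm_sub_le, norm_eval_taylorPolynomial_le hη hf hB hB₀ hfar, hz, mul_one]
      _ ≤ 2 * B * (‖z - c‖ / η) ^ M + B * (‖z - c‖ / η) ^ M := by gcongr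
      _ = _ := by ring

end Cauchy

namespace IsLocalizedKernel

variable {K : ℝ[X]} {R η a b x : ℝ} {m : ℕ}

lemma integral_comp_sub_le_one (hK : IsLocalizedKernel K R η m) (hab : a ≤ b)
    (hx : x ∈ Icc (b - R) (a + R)) : ∫ y in a..b, K.eval (x - y) ≤ 1 := by
  rw [intervalIntegral.integral_comp_sub_left (fun z => K.eval z), ← hK.integral_eq_one]
  exact intervalIntegral.integral_mono_interval (by linarith [hx.1]) (by linarith)
    (by linarith [hx.2]) (.of_forall hK.nonneg) (K.continuous.intervalIntegrable _ _)

lemma moment_comp_sub_le (hK : IsLocalizedKernel K R η m) (hab : a ≤ b)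
    (hx : x ∈ Icc (b - R) (a + R)) :
    ∫ y in a..b, K.eval (x - y) * ((x - y) / η) ^ (2 * m) ≤ (1 / 4) ^ m := by
  rw [intervalIntegral.integral_comp_sub_left (fun z => K.eval z * (z / η) ^ (2 * m))]
  refine le_trans ?_ hK.moment_le
  exact intervalIntegral.integral_mono_interval (by linarith [hx.1]) (by linarith)
    (by linarith [hx.2])
    (.of_forall fun z => mul_nonneg (hK.nonneg z) ((even_two_mul m).pow_nonneg _))
    (Continuous.intervalIntegrable (by fun_prop) _ _)

lemma one_sub_le_integral_comp_sub (hK : IsLocalizedKernel K R η m) (hη : 0 < η)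
    (hx : x ∈ Icc (b - R) (a + R)) (hx' : x ∈ Icc (a + η) (b - η)) :
    1 - (1 / 4) ^ m ≤ ∫ y in a..b, K.eval (x - y) := by
  have hKint (u v : ℝ) : IntervalIntegrable (fun z => K.eval z) volume u v :=
    K.continuous.intervalIntegrable u v
  have hmomint (u v : ℝ) : IntervalIntegrable (fun z => K.eval z * (z / η) ^ (2 * m))
      volume u v := Continuous.intervalIntegrable (by fun_prop) u v
  have hmom (z : ℝ) : 0 ≤ K.eval z * (z / η) ^ (2 * m) :=
    mul_nonneg (hK.nonneg z) ((even_two_mul m).pow_nonneg _)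
  have htail {u v : ℝ} (huv : u ≤ v) (hout : ∀ z ∈ Icc u v, η ≤ |z|) :
      ∫ z in u..v, K.eval z ≤ ∫ z in u..v, K.eval z * (z / η) ^ (2 * m) := by
    refine intervalIntegral.integral_mono_on huv (hKint u v) (hmomint u v) fun z hz =>
      le_mul_of_one_le_right (hK.nonneg z) ?_
    rw [← (even_two_mul m).pow_abs, abs_div, abs_of_pos hη]
    exact one_le_pow₀ ((one_le_div₀ hη).mpr (hout z hz))
  have hleft := htail (u := -R) (v := x - b) (by linarith [hx.1]) fun z hz => by
    linarith [hz.2, hx'.2, neg_le_abs z]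
  have hright := htail (u := x - a) (v := R) (by linarith [hx.2]) fun z hz => by
    linarith [hz.1, hx'.1, le_abs_self z]
  have hmid := intervalIntegral.integral_nonneg (μ := volume) (a := x - b) (b := x - a)
    (by linarith [hx'.1, hx'.2]) fun z _ => hmom z
  have hone := hK.integral_eq_one
  have hmoment := hK.moment_le
  rw [← intervalIntegral.integral_add_adjacent_intervals (hmomint (-R) (x - b)) (hmomint _ _),
    ← intervalIntegral.integral_add_adjacent_intervals (hmomint (x - b) (x - a)) (hmomint _ _)]
    at hmoment
  rw [← intervalIntegral.integral_add_adjacent_intervals (hKint (-R) (x - b)) (hKint _ _),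
    ← intervalIntegral.integral_add_adjacent_intervals (hKint (x - b) (x - a)) (hKint _ _)]
    at hone
  rw [intervalIntegral.integral_comp_sub_left (fun z => K.eval z)]
  linarith

lemma norm_integral_mul_le (hK : IsLocalizedKernel K R η m) (hab : a ≤ b)
    (hx : x ∈ Icc (b - R) (a + R)) {h : ℝ → ℂ} {A : ℝ} (hA : 0 ≤ A)
    (hh : ∀ y ∈ Icc a b, ‖h y‖ ≤ A * (|x - y| / η) ^ (2 * m)) :
    ‖∫ y in a..b, ((K.eval (x - y) : ℝ) : ℂ) * h y‖ ≤ A * (1 / 4) ^ m := by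
  calc _ ≤ ∫ y in a..b, A * (K.eval (x - y) * ((x - y) / η) ^ (2 * m)) := by
        refine intervalIntegral.norm_integral_le_of_norm_le hab (.of_forall fun y hy => ?_)
          (Continuous.intervalIntegrable (by fun_prop) _ _)
        rw [norm_mul, Complex.norm_real, Real.norm_of_nonneg (hK.nonneg _), mul_left_comm]
        refine mul_le_mul_of_nonneg_left ?_ (hK.nonneg _)
        simpa only [div_pow, (even_two_mul m).pow_abs] using hh y (Ioc_subset_Icc_self hy)
    _ ≤ A * (1 / 4) ^ m := by
        rw [intervalIntegral.integral_const_mul]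
        exact mul_le_mul_of_nonneg_left (hK.moment_comp_sub_le hab hx) hA

end IsLocalizedKernel

/-- The average over centres `y ∈ [a, b]`, with weights `K (x - y)`, of the values at `x` of the
Taylor polynomials of `f` at `y`. -/
noncomputable def mollifiedTaylor (f : ℂ → ℂ) (K : ℝ[X]) (M : ℕ) (a b x : ℝ) : ℂ :=
  ∫ y in a..b, ((K.eval (x - y) : ℝ) : ℂ) * (taylorPolynomial f M y).eval (x : ℂ)

section MollifiedTaylor

variable {f : ℂ → ℂ} {U : Set ℂ} {K : ℝ[X]} {R η a b B x : ℝ} {m : ℕ}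

lemma continuousOn_eval_taylorPolynomial_ofReal (hU : IsOpen U) (hf : DifferentiableOn ℂ f U)
    (hab : ∀ y ∈ Icc a b, (y : ℂ) ∈ U) (M : ℕ) (z : ℂ) :
    ContinuousOn (fun y : ℝ => (taylorPolynomial f M y).eval z) (Icc a b) :=
  (continuousOn_eval_taylorPolynomial hU hf M z).comp Complex.continuous_ofReal.continuousOn hab

lemma exists_polynomial_eval_eq_mollifiedTaylor (hU : IsOpen U) (hf : DifferentiableOn ℂ f U)
    (hab : a ≤ b) (hmem : ∀ y ∈ Icc a b, (y : ℂ) ∈ U) (K : ℝ[X]) (M : ℕ) :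
    ∃ P : ℂ[X], P.natDegree ≤ K.natDegree + M ∧
      ∀ x : ℝ, P.eval (x : ℂ) = mollifiedTaylor f K M a b x := by
  let F (y : ℝ) : ℂ[X] :=
    (K.map Complex.ofRealHom).comp (X - C (y : ℂ)) * taylorPolynomial f M y
  have hdeg (y : ℝ) : (F y).natDegree ≤ K.natDegree + M := by
    refine natDegree_mul_le.trans (add_le_add ?_ (natDegree_taylorPolynomial_le f M y))
    rw [natDegree_comp, natDegree_X_sub_C, mul_one]
    exact natDegree_map_le
  have hint (z : ℂ) : IntegrableOn (fun y => (F y).eval z) (Ioc a b) := by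
    refine (ContinuousOn.integrableOn_Icc ?_).mono_set Ioc_subset_Icc_self
    have := continuousOn_eval_taylorPolynomial_ofReal hU hf hmem M z
    simp only [F, eval_mul, eval_comp, eval_sub, eval_X, eval_C]
    fun_prop
  obtain ⟨P, hPdeg, hP⟩ := exists_polynomial_eval_eq_integral hdeg hint
  refine ⟨P, hPdeg, fun x => ?_⟩
  rw [hP, mollifiedTaylor, intervalIntegral.integral_of_le hab]
  congr! 2
  simp only [F, eval_mul, eval_comp, eval_sub, eval_X, eval_C]
  rw [← Complex.ofReal_sub, ← Complex.ofRealHom_eq_coe, eval_map_apply, Complex.ofRealHom_eq_coe]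

variable (hK : IsLocalizedKernel K R η m) (hη : 0 < η) (hab : a ≤ b) (hf : DifferentiableOn ℂ f U)
  (hB : ∀ z ∈ U, ‖f z‖ ≤ B) (hball : ∀ y ∈ Icc a b, closedBall (y : ℂ) (2 * η) ⊆ U)
  (hx : x ∈ Icc (b - R) (a + R))
include hK hη hab hf hB hball hx

lemma norm_mollifiedTaylor_le (hfar : x ∉ Ioo (a - η) (b + η)) :
    ‖mollifiedTaylor f K (2 * m) a b x‖ ≤ 2 * B * (1 / 4) ^ m := by
  have hB₀ : 0 ≤ B := by
    have ha := hball a (left_mem_Icc.mpr hab) (mem_closedBall_self (by positivity))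
    exact (norm_nonneg _).trans (hB a ha)
  refine hK.norm_integral_mul_le hab hx (by positivity) fun y hy => ?_
  have hdist : η ≤ |x - y| := by
    by_contra! hlt
    obtain ⟨h₁, h₂⟩ := abs_lt.mp hlt
    exact hfar ⟨by linarith [hy.1], by linarith [hy.2]⟩
  have hnorm : ‖(x : ℂ) - y‖ = |x - y| := by
    rw [← Complex.ofReal_sub, Complex.norm_real, Real.norm_eq_abs]
  rw [← hnorm] at hdist ⊢
  exact norm_eval_taylorPolynomial_le hη (hf.diffContOnCl_ball (hball y hy))
    (fun w hw => hB w (hball y hy (sphere_subset_closedBall hw))) hB₀ hdist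

lemma norm_mollifiedTaylor_sub_mass_mul_le (hU : IsOpen U) (hfx : ‖f x‖ ≤ B) :
    ‖mollifiedTaylor f K (2 * m) a b x - (∫ y in a..b, K.eval (x - y) : ℝ) * f x‖ ≤
      3 * B * (1 / 4) ^ m := by
  have hB₀ : 0 ≤ B := (norm_nonneg _).trans hfx
  have hmem (y : ℝ) (hy : y ∈ Icc a b) : (y : ℂ) ∈ U :=
    hball y hy (mem_closedBall_self (by positivity))
  have hint : IntervalIntegrable (fun y => ((K.eval (x - y) : ℝ) : ℂ) *
      (taylorPolynomial f (2 * m) y).eval (x : ℂ)) volume a b := by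
    have := continuousOn_eval_taylorPolynomial_ofReal hU hf hmem (2 * m) x
    refine ContinuousOn.intervalIntegrable_of_Icc hab ?_
    fun_prop
  have hsplit : mollifiedTaylor f K (2 * m) a b x - (∫ y in a..b, K.eval (x - y) : ℝ) * f x =
      ∫ y in a..b, ((K.eval (x - y) : ℝ) : ℂ) *
        ((taylorPolynomial f (2 * m) y).eval (x : ℂ) - f x) := by
    simp_rw [mul_sub]
    rw [intervalIntegral.integral_sub hint (Continuous.intervalIntegrable (by fun_prop) _ _),
      intervalIntegral.integral_mul_const, intervalIntegral.integral_ofReal, mollifiedTaylor]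
  rw [hsplit]
  refine hK.norm_integral_mul_le hab hx (by positivity) fun y hy => ?_
  have := norm_sub_eval_taylorPolynomial_le_of_norm_le (M := 2 * m) hη
    (hf.diffContOnCl_ball (hball y hy))
    (fun w hw => hB w (hball y hy (sphere_subset_closedBall hw))) hfx
  rwa [← Complex.ofReal_sub, Complex.norm_real, Real.norm_eq_abs] at this

lemma norm_sub_mollifiedTaylor_le (hU : IsOpen U) (hx' : x ∈ Icc (a + η) (b - η))
    (hfx : ‖f x‖ ≤ B) :
    ‖f x - mollifiedTaylor f K (2 * m) a b x‖ ≤ 4 * B * (1 / 4) ^ m := by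
  set μ := ∫ y in a..b, K.eval (x - y)
  have hmass : ‖1 - (μ : ℂ)‖ ≤ (1 / 4) ^ m := by
    rw [← Complex.ofReal_one, ← Complex.ofReal_sub, Complex.norm_real, Real.norm_of_nonneg]
    · linarith [hK.one_sub_le_integral_comp_sub hη hx hx']
    · linarith [hK.integral_comp_sub_le_one hab hx]
  calc _ = ‖(1 - (μ : ℂ)) * f x - (mollifiedTaylor f K (2 * m) a b x - μ * f x)‖ := by ring_nf
    _ ≤ (1 / 4) ^ m * B + 3 * B * (1 / 4) ^ m := by
        grw [norm_sub_le, norm_mul, hmass, hfx,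
          norm_mollifiedTaylor_sub_mass_mul_le hK hη hab hf hB hball hx hU hfx]
    _ = _ := by ring

lemma norm_mollifiedTaylor_le_add_norm (hU : IsOpen U) (hfx : ‖f x‖ ≤ B) :
    ‖mollifiedTaylor f K (2 * m) a b x‖ ≤ 3 * B * (1 / 4) ^ m + ‖f x‖ := by
  set μ := ∫ y in a..b, K.eval (x - y)
  have hmass : ‖(μ : ℂ)‖ ≤ 1 := by
    rw [Complex.norm_real, Real.norm_of_nonneg
      (intervalIntegral.integral_nonneg hab fun y _ => hK.nonneg _)]
    exact hK.integral_comp_sub_le_one hab hx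
  calc _ = ‖(mollifiedTaylor f K (2 * m) a b x - μ * f x) + μ * f x‖ := by ring_nf
    _ ≤ 3 * B * (1 / 4) ^ m + 1 * ‖f x‖ := by
        grw [norm_add_le, norm_mul, hmass,
          norm_mollifiedTaylor_sub_mass_mul_le hK hη hab hf hB hball hx hU hfx]
    _ = _ := by rw [one_mul]

end MollifiedTaylor

lemma closedBall_ofReal_subset_thickening {r δ s t y : ℝ} (hr : 0 ≤ r) (hs : 0 ≤ s)
    (hst : s + t < δ) (hy : y ∈ Icc (-r - s) (r + s)) :
    closedBall (y : ℂ) t ⊆ thickening δ (Complex.ofReal '' Icc (-r) r) := by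
  intro z hz
  set p := max (-r) (min y r)
  have hp : p ∈ Icc (-r) r := ⟨le_max_left _ _, max_le (by linarith) (min_le_right _ _)⟩
  have hyp : |y - p| ≤ s := by
    rw [abs_le]
    constructor <;> simp only [p] <;> grind
  refine mem_thickening_iff.mpr ⟨p, mem_image_of_mem _ hp, ?_⟩
  calc dist z p ≤ dist z y + dist (y : ℂ) p := dist_triangle _ _ _
    _ ≤ t + s := by
        rw [Complex.isometry_ofReal.dist_eq, Real.dist_eq]
        exact add_le_add hz hyp
    _ < δ := by linarith

lemma degree_bound_le {δ L : ℝ} (hδ : 0 < δ) (hδ₁ : δ ≤ 1) (hL : 1 ≤ L) :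
    ((4 * ⌈108 * (1 / δ)⌉₊ * (⌈L⌉₊ + 1) + 2 * ⌈L⌉₊ : ℕ) : ℝ) ≤ 1312 * (1 / δ) * L := by
  have hδinv : 1 ≤ 1 / δ := (one_le_div hδ).mpr hδ₁
  have hk : (⌈108 * (1 / δ)⌉₊ : ℝ) ≤ 109 * (1 / δ) := by
    linarith [Nat.ceil_lt_add_one (show 0 ≤ 108 * (1 / δ) by positivity)]
  have hm : (⌈L⌉₊ : ℝ) ≤ L + 1 := (Nat.ceil_lt_add_one (by linarith)).le
  push_cast
  calc (4 * ⌈108 * (1 / δ)⌉₊ * (⌈L⌉₊ + 1) + 2 * ⌈L⌉₊ : ℝ)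
      ≤ 4 * (109 * (1 / δ)) * (3 * L) + 1 * (4 * L) := by
        gcongr ?_ * ?_ * ?_ + ?_ <;> linarith
    _ ≤ 4 * (109 * (1 / δ)) * (3 * L) + 1 / δ * (4 * L) := by gcongr
    _ = 1312 * (1 / δ) * L := by ring

lemma one_div_four_pow_ceil_log_le {t : ℝ} (ht : 0 < t) : (1 / 4) ^ ⌈Real.log t⌉₊ ≤ t⁻¹ := by
  rw [one_div_pow, one_div]
  gcongr
  calc t = Real.exp (Real.log t) := (Real.exp_log ht).symm
    _ ≤ Real.exp ⌈Real.log t⌉₊ := Real.exp_le_exp.mpr (Nat.le_ceil _)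
    _ = Real.exp 1 ^ ⌈Real.log t⌉₊ := by rw [← Real.exp_nat_mul, mul_one]
    _ ≤ 4 ^ ⌈Real.log t⌉₊ := by gcongr; linarith [Real.exp_one_lt_three]

lemma exists_polynomial_approx_of_differentiableOn_thickening {f : ℂ → ℂ} {r δ B ε : ℝ}
    {m : ℕ} (hr : 0 ≤ r) (hr₁ : r ≤ 1) (hδ : 0 < δ) (hδ₁ : δ ≤ 1)
    (hf : DifferentiableOn ℂ f (thickening δ (Complex.ofReal '' Icc (-r) r)))
    (hB : ∀ z ∈ thickening δ (Complex.ofReal '' Icc (-r) r), ‖f z‖ ≤ B) (hm : m ≠ 0)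
    (hε : 4 * B * (1 / 4) ^ m ≤ ε) :
    ∃ P : ℂ[X], P.natDegree ≤ 4 * ⌈108 * (1 / δ)⌉₊ * (m + 1) + 2 * m ∧
      (∀ x ∈ Icc (-r) r, ‖f x - P.eval (x : ℂ)‖ ≤ ε) ∧
      ∀ x ∈ Icc (-1 : ℝ) 1, ‖P.eval (x : ℂ)‖ ≤
        ε + ⨆ y : Icc (-r - δ / 2) (r + δ / 2), ‖f (y : ℝ)‖ := by
  set U := thickening δ (Complex.ofReal '' Icc (-r) r)
  set k := ⌈108 * (1 / δ)⌉₊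
  have hU : IsOpen U := isOpen_thickening
  have hη : 0 < δ / 4 := by positivity
  have hK : IsLocalizedKernel (peakKernel (9 / 4) k m) (9 / 4) (δ / 4) m := by
    refine isLocalizedKernel_peakKernel (by norm_num) hη hm (le_trans (le_of_eq ?_) (Nat.le_ceil _))
    field_simp
    norm_num
  have hab : -r - δ / 4 ≤ r + δ / 4 := by linarith
  have hball (y : ℝ) (hy : y ∈ Icc (-r - δ / 4) (r + δ / 4)) :
      closedBall (y : ℂ) (2 * (δ / 4)) ⊆ U :=
    closedBall_ofReal_subset_thickening hr hη.le (by linarith) hy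
  have hfx (x : ℝ) (hx : x ∈ Icc (-r - δ / 2) (r + δ / 2)) : ‖f x‖ ≤ B :=
    hB _ (closedBall_ofReal_subset_thickening (t := 0) hr (by linarith) (by linarith) hx
      (mem_closedBall_self le_rfl))
  have hwindow (x : ℝ) (hx : x ∈ Icc (-1) 1) :
      x ∈ Icc (r + δ / 4 - 9 / 4) (-r - δ / 4 + 9 / 4) :=
    ⟨by linarith [hx.1], by linarith [hx.2]⟩
  obtain ⟨P, hPdeg, hP⟩ := exists_polynomial_eval_eq_mollifiedTaylor hU hf hab
    (fun y hy => hball y hy (mem_closedBall_self (by positivity))) (peakKernel (9 / 4) k m) (2 * m)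
  refine ⟨P, hPdeg.trans (by gcongr; exact natDegree_peakKernel_le _ _ _), fun x hx => ?_,
    fun x hx => ?_⟩
  · rw [hP]
    refine (norm_sub_mollifiedTaylor_le hK hη hab hf hB hball
      (hwindow x ⟨by linarith [hx.1], by linarith [hx.2]⟩) hU
      ⟨by linarith [hx.1], by linarith [hx.2]⟩
      (hfx x ⟨by linarith [hx.1], by linarith [hx.2]⟩)).trans hε
  rw [hP]
  have hbdd : BddAbove (range fun y : Icc (-r - δ / 2) (r + δ / 2) => ‖f (y : ℝ)‖) :=
    ⟨B, by rintro _ ⟨y, rfl⟩; exact hfx y y.2⟩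
  have hB₀ : 0 ≤ B := (norm_nonneg _).trans (hfx 0 ⟨by linarith, by linarith⟩)
  have hsmall : 0 ≤ B * (1 / 4) ^ m := by positivity
  by_cases hxnear : x ∈ Icc (-r - δ / 2) (r + δ / 2)
  · linarith [norm_mollifiedTaylor_le_add_norm hK hη hab hf hB hball (hwindow x hx) hU
      (hfx x hxnear), le_ciSup hbdd ⟨x, hxnear⟩]
  · have hfar : x ∉ Ioo (-r - δ / 4 - δ / 4) (r + δ / 4 + δ / 4) := fun h =>
      hxnear ⟨by linarith [h.1], by linarith [h.2]⟩
    linarith [norm_mollifiedTaylor_le hK hη hab hf hB hball (hwindow x hx) hfar,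
      Real.iSup_nonneg fun y : Icc (-r - δ / 2) (r + δ / 2) => norm_nonneg (f (y : ℝ))]

theorem poly_approx_local_taylor_general :
    ∃ C : ℝ, 0 < C ∧ ∀ r δ : ℝ, 0 ≤ r → r ≤ 1 → 0 < δ → δ ≤ 1 → ∀ (f : ℂ → ℂ) (B ε : ℝ),
      DifferentiableOn ℂ f (thickening δ (Complex.ofReal '' Icc (-r) r)) →
      (∀ z ∈ thickening δ (Complex.ofReal '' Icc (-r) r), ‖f z‖ ≤ B) →
      0 < ε → ε < 3 * B / 2 →
      ∃ P : ℂ[X], (P.natDegree : ℝ) ≤ C * (1 / δ) * Real.log (12 * B / ε) ∧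
        (∀ x ∈ Icc (-r) r, ‖f x - P.eval (x : ℂ)‖ ≤ ε) ∧
        ∀ x ∈ Icc (-1 : ℝ) 1, ‖P.eval (x : ℂ)‖ ≤
          ε + ⨆ y : Icc (-r - δ / 2) (r + δ / 2), ‖f (y : ℝ)‖ := by
  refine ⟨1312, by norm_num, fun r δ hr hr₁ hδ hδ₁ f B ε hf hB hε hεB => ?_⟩
  have hB₀ : 0 < B := by linarith
  have hL : 1 ≤ Real.log (12 * B / ε) := by
    rw [Real.le_log_iff_exp_le (by positivity), le_div_iff₀ hε]
    nlinarith [Real.exp_one_lt_three]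
  have herror : 4 * B * (1 / 4) ^ ⌈Real.log (12 * B / ε)⌉₊ ≤ ε := by
    grw [one_div_four_pow_ceil_log_le (by positivity)]
    field_simp
    norm_num
  obtain ⟨P, hdeg, hP⟩ := exists_polynomial_approx_of_differentiableOn_thickening hr hr₁ hδ hδ₁
    hf hB (Nat.ceil_pos.mpr (by linarith)).ne' herror
  exact ⟨P, (Nat.cast_le.mpr hdeg).trans (degree_bound_le hδ hδ₁ hL), hP⟩

section PowerSeries

variable {a : ℕ → ℂ} {ρ : ℝ} {z : ℂ}

lemma norm_mul_pow_le_of_mem_ball (hz : z ∈ ball 0 ρ) (k : ℕ) : ‖a k * z ^ k‖ ≤ ‖a k‖ * ρ ^ k := by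
  rw [norm_mul, norm_pow]
  gcongr
  exact (mem_ball_zero_iff.mp hz).le

lemma differentiableOn_tsum_mul_pow (ha : Summable fun k => ‖a k‖ * ρ ^ k) :
    DifferentiableOn ℂ (fun z => ∑' k, a k * z ^ k) (ball 0 ρ) :=
  Complex.differentiableOn_tsum_of_summable_norm ha (fun k => by fun_prop) isOpen_ball
    fun k _ hz => norm_mul_pow_le_of_mem_ball hz k

lemma norm_tsum_mul_pow_le (ha : Summable fun k => ‖a k‖ * ρ ^ k) (hz : z ∈ ball 0 ρ) :
    ‖∑' k, a k * z ^ k‖ ≤ ∑' k, ‖a k‖ * ρ ^ k :=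
  tsum_of_norm_bounded ha.hasSum (norm_mul_pow_le_of_mem_ball hz)

end PowerSeries

lemma thickening_ofReal_image_Icc_subset_ball (r δ : ℝ) :
    thickening δ (Complex.ofReal '' Icc (-r) r) ⊆ ball 0 (r + δ) := by
  rintro z hz
  obtain ⟨_, ⟨p, hp, rfl⟩, hzp⟩ := mem_thickening_iff.mp hz
  calc dist z 0 ≤ dist z p + dist (p : ℂ) 0 := dist_triangle _ _ _
    _ < δ + r := by
        refine add_lt_add_of_lt_of_le hzp ?_
        rw [dist_zero_right, Complex.norm_real]
        exact abs_le.mpr hp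
    _ = r + δ := add_comm _ _

/-- (Piecewise polynomial approximations based on a local Taylor series.)
There is a universal constant `C > 0` such that: for `r ∈ (0,1]`, `δ ∈ (0,r]`, and a power
series `f(x) = Σ aₖ xᵏ` converging absolutely on `[−r−δ, r+δ]`, any `B > 0` with
`B ≥ Σ |aₖ|(r+δ)ᵏ`, and any `ε ∈ (0, 3B/2)`, there exists a complex polynomial `P` of
degree at most `C·(1/δ)·log(12B/ε)` with `sup_{[−r,r]} |f − P| ≤ ε` and
`sup_{[−1,1]} |P| ≤ ε + sup_{[−r−δ/2, r+δ/2]} |f|`. -/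
theorem poly_approx_local_taylor :
    ∃ C : ℝ, 0 < C ∧
      ∀ (r δ : ℝ), 0 < r → r ≤ 1 → 0 < δ → δ ≤ r →
      ∀ (a : ℕ → ℂ) (B ε : ℝ),
        Summable (fun k : ℕ => ‖a k‖ * (r + δ) ^ k) →
        0 < B → (∑' k : ℕ, ‖a k‖ * (r + δ) ^ k) ≤ B →
        0 < ε → ε < 3 * B / 2 →
        ∃ P : Polynomial ℂ,
          (P.natDegree : ℝ) ≤ C * (1 / δ) * Real.log (12 * B / ε) ∧
          (∀ x : ℝ, x ∈ Set.Icc (-r) r →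
            ‖(∑' k : ℕ, a k * (x : ℂ) ^ k) - P.eval (x : ℂ)‖ ≤ ε) ∧
          (∀ x : ℝ, x ∈ Set.Icc (-1 : ℝ) 1 →
            ‖P.eval (x : ℂ)‖ ≤
              ε + ⨆ y : Set.Icc (-r - δ / 2) (r + δ / 2),
                ‖∑' k : ℕ, a k * ((y : ℝ) : ℂ) ^ k‖) := by
  obtain ⟨C, hC, happrox⟩ := poly_approx_local_taylor_general
  refine ⟨C, hC, fun r δ hr hr₁ hδ hδr a B ε ha _ hsum hε hεB => ?_⟩
  have hsub := thickening_ofReal_image_Icc_subset_ball r δ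
  exact happrox r δ hr.le hr₁ hδ (hδr.trans hr₁) (fun z => ∑' k, a k * z ^ k) B ε
    ((differentiableOn_tsum_mul_pow ha).mono hsub)
    (fun z hz => (norm_tsum_mul_pow_le ha (hsub hz)).trans hsum) hε hεB
end

section
/- Let δ' ∈ (0, 1), ε ∈ (0, 1), let K ≥ 1 be an integer, let b_0, …, b_{K−1} ∈ ℂ with B₁ := Σ_{k=0}^{K−1} |b_k| > 0, and let g : [−1+δ', 1−δ'] → ℂ satisfy |g(y) − Σ_{k=0}^{K−1} b_k y^k| ≤ ε/12 for all y ∈ [−1+δ', 1−δ']. Then, with M := max(2⌈(1/δ')·log(12B₁/ε)⌉, 0), there exist complex numbers c_{−M}, …, c_M with Σ_{m=−M}^{M} |c_m| ≤ B₁ such that |g(y) − Σ_{m=−M}^{M} c_m e^{iπmy/2}| ≤ ε/3 for all y ∈ [−1+δ', 1−δ']. -/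
/-!
On `(-1, 1)` one has `y = (2 / π) * arcsin (sin (π * y / 2))`. The Taylor coefficients of `arcsin`
are nonnegative with sum at most `π / 2`, so on a compact subset `s` of `(-1, 1)` the coordinate
function lies in the closed absolutely convex hull, in `C(s, ℂ)`, of the powers of
`sin (π * y / 2)`. Since these powers form a monoid, the hull also contains all powers of the
coordinate function, and therefore `p / B` for every polynomial `p` with coefficient `ℓ¹`-norm `B`.

It remains to approximate each `sin (π * y / 2) ^ l`. It is a combination of the modes
`exp (I * π * m * y / 2)` whose weights have binomial absolute values. For small `l`, Chernoff's
bound with `cosh t ≤ exp (t ^ 2 / 2)` makes the weight of the modes with `|m| > M` negligible; for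
large `l`, the whole power is small because `|sin (π * y / 2)| ≤ exp (-δ ^ 2 / 2)` for
`|y| ≤ 1 - δ`.
-/

section Arcsin

open scoped Real Topology

theorem multichoose_one_half (n : ℕ) :
    Ring.multichoose (1 / 2 : ℝ) n = n.centralBinom / 4 ^ n := by
  induction n with
  | zero => simp
  | succ n ih =>
    have hfact (m : ℕ) : (m.factorial : ℝ) * Ring.multichoose (1 / 2 : ℝ) m =
        (ascPochhammer ℝ m).eval (1 / 2) := by
      rw [← nsmul_eq_mul, Ring.factorial_nsmul_multichoose_eq_ascPochhammer,
        Polynomial.ascPochhammer_smeval_eq_eval]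
    have hrec : (n + 1 : ℝ) * Ring.multichoose (1 / 2 : ℝ) (n + 1) =
        Ring.multichoose (1 / 2 : ℝ) n * (1 / 2 + n) := by
      have hn := hfact (n + 1)
      rw [ascPochhammer_succ_eval, ← hfact n, Nat.factorial_succ] at hn
      push_cast at hn
      have : (n.factorial : ℝ) ≠ 0 := by positivity
      apply mul_left_cancel₀ this
      linear_combination hn
    have hbinom : (n + 1 : ℝ) * (n + 1).centralBinom = 2 * (2 * n + 1) * n.centralBinom :=
      mod_cast n.succ_mul_centralBinom_succ
    have : (n + 1 : ℝ) ≠ 0 := by positivity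
    apply mul_left_cancel₀ this
    rw [hrec, ih, mul_div_assoc', hbinom, pow_succ]
    ring

theorem hasSum_one_div_sqrt_one_sub {x : ℝ} (hx : |x| < 1) :
    HasSum (fun n : ℕ ↦ n.centralBinom / 4 ^ n * x ^ n) (1 / √(1 - x)) := by
  have h := (Real.one_div_one_sub_rpow_hasFPowerSeriesOnBall_zero (1 / 2)).hasSum (y := x)
    (by simpa [edist_dist] using hx)
  simpa [-one_div, FormalMultilinearSeries.ofScalars_apply_eq, ← Ring.multichoose_eq,
    multichoose_one_half, Real.sqrt_eq_rpow, mul_comm] using h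

/-- The Taylor coefficient of `arcsin` at `x ^ (2 * n + 1)`; the even coefficients vanish. -/
noncomputable def arcsinCoeff (n : ℕ) : ℝ := n.centralBinom / 4 ^ n / (2 * n + 1)

theorem arcsinCoeff_nonneg (n : ℕ) : 0 ≤ arcsinCoeff n := by
  unfold arcsinCoeff; positivity

theorem hasSum_arcsin {x : ℝ} (hx : |x| < 1) :
    HasSum (fun n ↦ arcsinCoeff n * x ^ (2 * n + 1)) (Real.arcsin x) := by
  have hlt {t : ℝ} (ht : t ∈ Set.uIcc 0 x) : |t| < 1 := by
    simpa using (Set.abs_sub_left_of_mem_uIcc ht).trans_lt (by simpa using hx)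
  have hsq {t : ℝ} (ht : |t| < 1) : |t ^ 2| < 1 := by simpa using ht
  have hint : ∫ t in 0..x, 1 / √(1 - t ^ 2) = Real.arcsin x := by
    have hderiv (t : ℝ) (ht : t ∈ Set.uIcc 0 x) :
        HasDerivAt Real.arcsin (1 / √(1 - t ^ 2)) t :=
      have := abs_lt.mp (hlt ht)
      Real.hasDerivAt_arcsin this.1.ne' this.2.ne
    rw [intervalIntegral.integral_eq_sub_of_hasDerivAt hderiv, Real.arcsin_zero, sub_zero]
    refine ContinuousOn.intervalIntegrable (ContinuousOn.div (by fun_prop) (by fun_prop) ?_)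
    intro t ht
    have := (sq_lt_one_iff_abs_lt_one t).mpr (hlt ht)
    exact (Real.sqrt_pos.mpr (by linarith)).ne'
  have hterm (n : ℕ) : ∫ t in 0..x, n.centralBinom / 4 ^ n * (t ^ 2) ^ n =
      arcsinCoeff n * x ^ (2 * n + 1) := by
    simp_rw [← pow_mul, intervalIntegral.integral_const_mul, integral_pow, arcsinCoeff]
    push_cast
    ring
  rw [← hint]
  simp_rw [← hterm]
  refine intervalIntegral.hasSum_integral_of_dominated_convergence
    (fun n _ ↦ n.centralBinom / 4 ^ n * (x ^ 2) ^ n) (fun n ↦ by fun_prop) ?_ ?_ ?_ ?_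
  · refine fun n ↦ .of_forall fun t ht ↦ ?_
    have htx : t ^ 2 ≤ x ^ 2 := sq_le_sq.mpr (by
      simpa using Set.abs_sub_left_of_mem_uIcc (Set.uIoc_subset_uIcc ht))
    rw [Real.norm_of_nonneg (by positivity)]
    gcongr
  · exact .of_forall fun _ _ ↦ (hasSum_one_div_sqrt_one_sub (hsq hx)).summable
  · exact intervalIntegrable_const
  · exact .of_forall fun t ht ↦
      hasSum_one_div_sqrt_one_sub (hsq (hlt (Set.uIoc_subset_uIcc ht)))

theorem sum_arcsinCoeff_le (t : Finset ℕ) : ∑ n ∈ t, arcsinCoeff n ≤ π / 2 := by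
  have hlim : Filter.Tendsto (fun x : ℝ ↦ ∑ n ∈ t, arcsinCoeff n * x ^ (2 * n + 1))
      (𝓝[<] 1) (𝓝 (∑ n ∈ t, arcsinCoeff n)) :=
    tendsto_nhdsWithin_of_tendsto_nhds (Continuous.tendsto' (by fun_prop) _ _ (by simp))
  refine le_of_tendsto hlim ?_
  filter_upwards [Ioo_mem_nhdsLT zero_lt_one] with x ⟨hx0, hx1⟩
  have hx : |x| < 1 := abs_lt.mpr ⟨by linarith, hx1⟩
  have hnonneg (n : ℕ) : 0 ≤ arcsinCoeff n * x ^ (2 * n + 1) :=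
    mul_nonneg (arcsinCoeff_nonneg n) (by positivity)
  exact (sum_le_hasSum t (fun n _ ↦ hnonneg n) (hasSum_arcsin hx)).trans
    (Real.arcsin_le_pi_div_two x)

theorem hasSum_arcsinCoeff_mul_sin_pow {y : ℝ} (hy : |y| < 1) :
    HasSum (fun n ↦ 2 / π * (arcsinCoeff n * Real.sin (π * y / 2) ^ (2 * n + 1))) y := by
  have hangle : -(π / 2) < π * y / 2 ∧ π * y / 2 < π / 2 := by
    rw [← abs_lt, mul_div_right_comm, abs_mul, abs_of_pos Real.pi_div_two_pos]
    exact mul_lt_of_lt_one_right Real.pi_div_two_pos hy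
  have hsin : |Real.sin (π * y / 2)| < 1 := by
    rw [abs_lt, ← Real.sin_pi_div_two, ← Real.sin_neg]
    constructor <;> apply Real.sin_lt_sin_of_lt_of_le_pi_div_two <;> linarith
  have hsum := (hasSum_arcsin hsin).mul_left (2 / π)
  rwa [Real.arcsin_sin hangle.1.le hangle.2.le,
    show 2 / π * (π * y / 2) = y by field_simp] at hsum

end Arcsin

section AbsConvex

open scoped ComplexOrder Pointwise

variable {𝕜 E F A ι : Type*} [RCLike 𝕜]

theorem sum_smul_mem_of_absConvex [AddCommGroup E] [Module 𝕜 E] [Module ℝ E] [IsScalarTower ℝ 𝕜 E]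
    {s : Set E} (hs : AbsConvex 𝕜 s) (hne : s.Nonempty) {t : Finset ι} {w : ι → 𝕜} {z : ι → E}
    (hw : ∑ i ∈ t, ‖w i‖ ≤ 1) (hz : ∀ i ∈ t, z i ∈ s) : ∑ i ∈ t, w i • z i ∈ s := by
  set σ := ∑ i ∈ t, ‖w i‖ with hσ
  have hσ0 : 0 ≤ σ := Finset.sum_nonneg fun _ _ ↦ norm_nonneg _
  obtain hσ_zero | hσ_pos := hσ0.eq_or_lt
  · have hw0 : ∀ i ∈ t, w i = 0 := by
      simpa [hσ, Finset.sum_eq_zero_iff_of_nonneg] using hσ_zero.symm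
    rw [Finset.sum_eq_zero fun i hi ↦ by rw [hw0 i hi, zero_smul]]
    exact hs.1.zero_mem hne
  · have hphase (i : ι) (hi : i ∈ t) : (w i / ‖w i‖) • z i ∈ s :=
      hs.1.smul_mem (by simpa using div_self_le_one ‖w i‖) (hz i hi)
    have hmean : ∑ i ∈ t, (‖w i‖ / σ) • (w i / ‖w i‖) • z i ∈ s :=
      (convex_RCLike_iff_convex_real.mp hs.2).sum_mem (fun _ _ ↦ by positivity)
        (by rw [← Finset.sum_div, div_self hσ_pos.ne']) hphase
    have hterm (i : ι) : w i • z i = (σ : 𝕜) • (‖w i‖ / σ) • (w i / ‖w i‖) • z i := by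
      rw [← algebraMap_smul 𝕜 (‖w i‖ / σ), smul_smul, smul_smul, RCLike.algebraMap_eq_ofReal,
        RCLike.ofReal_div]
      have hσ_ne : (σ : 𝕜) ≠ 0 := mod_cast hσ_pos.ne'
      obtain hw0 | hw0 := eq_or_ne (w i) 0
      · simp [hw0]
      · have hw_ne : (‖w i‖ : 𝕜) ≠ 0 := mod_cast norm_ne_zero_iff.mpr hw0
        field_simp
    rw [Finset.sum_congr rfl fun i _ ↦ hterm i, ← Finset.smul_sum]
    exact hs.1.smul_mem (by simpa [abs_of_pos hσ_pos]) hmean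

theorem absConvex_preimage [AddCommGroup E] [Module 𝕜 E] [AddCommGroup F] [Module 𝕜 F]
    {s : Set F} (hs : AbsConvex 𝕜 s) (f : E →ₗ[𝕜] F) : AbsConvex 𝕜 (f ⁻¹' s) :=
  ⟨hs.1.mulActionHom_preimage f.toMulActionHom, hs.2.linear_preimage f⟩

theorem mapsTo_closedAbsConvexHull [AddCommGroup E] [Module 𝕜 E] [TopologicalSpace E]
    [AddCommGroup F] [Module 𝕜 F] [TopologicalSpace F] {s : Set E} {t : Set F} (f : E →L[𝕜] F)
    (h : Set.MapsTo f s (closedAbsConvexHull 𝕜 t)) :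
    Set.MapsTo f (closedAbsConvexHull 𝕜 s) (closedAbsConvexHull 𝕜 t) :=
  closedAbsConvexHull_min h (absConvex_preimage absConvex_convexClosedHull f.toLinearMap)
    (isClosed_closedAbsConvexHull.preimage f.continuous)

theorem mul_mem_closedAbsConvexHull_mul [SeminormedRing A] [NormedAlgebra 𝕜 A] {s t : Set A}
    {x y : A} (hx : x ∈ closedAbsConvexHull 𝕜 s) (hy : y ∈ closedAbsConvexHull 𝕜 t) :
    x * y ∈ closedAbsConvexHull 𝕜 (s * t) :=
  mapsTo_closedAbsConvexHull ((ContinuousLinearMap.mul 𝕜 A).flip y) (fun _ ha ↦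
    mapsTo_closedAbsConvexHull (ContinuousLinearMap.mul 𝕜 A _) (fun _ hb ↦
      subset_closedAbsConvexHull (Set.mul_mem_mul ha hb)) hy) hx

theorem pow_mem_closedAbsConvexHull [SeminormedRing A] [NormedAlgebra 𝕜 A] (S : Submonoid A) {x : A}
    (hx : x ∈ closedAbsConvexHull 𝕜 (S : Set A)) (k : ℕ) :
    x ^ k ∈ closedAbsConvexHull 𝕜 (S : Set A) := by
  induction k with
  | zero => simpa using subset_closedAbsConvexHull S.one_mem
  | succ k ih => simpa [pow_succ] using mul_mem_closedAbsConvexHull_mul ih hx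

theorem exists_sum_smul_eq_of_mem_absConvexHull [AddCommGroup E] [Module 𝕜 E] {T : Finset ι}
    {ψ : ι → E} {x : E} (hx : x ∈ absConvexHull 𝕜 (ψ '' T)) :
    ∃ c : ι → 𝕜, ∑ i ∈ T, ‖c i‖ ≤ 1 ∧ ∑ i ∈ T, c i • ψ i = x := by
  classical
  refine absConvexHull_min (t := {x | ∃ c : ι → 𝕜, ∑ i ∈ T, ‖c i‖ ≤ 1 ∧ ∑ i ∈ T, c i • ψ i = x})
    ?_ ⟨?_, ?_⟩ hx
  · rintro _ ⟨i, hi, rfl⟩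
    exact ⟨Pi.single i 1, by simp_all [Pi.single_apply, apply_ite norm],
      by simp_all [Pi.single_apply]⟩
  · rintro a ha _ ⟨_, ⟨c, hc, rfl⟩, rfl⟩
    refine ⟨a • c, ?_, by simp [Finset.smul_sum, mul_smul]⟩
    simpa [← Finset.mul_sum] using mul_le_one₀ ha (by positivity) hc
  · rintro _ ⟨c, hc, rfl⟩ _ ⟨d, hd, rfl⟩ a b ha hb hab
    refine ⟨a • c + b • d, ?_,
      by simp [Finset.smul_sum, mul_smul, add_smul, Finset.sum_add_distrib]⟩
    have hab' : ‖a‖ + ‖b‖ = 1 := by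
      rw [← RCLike.norm_of_nonneg' ha, ← RCLike.norm_of_nonneg' hb] at hab
      exact_mod_cast hab
    calc ∑ i ∈ T, ‖(a • c + b • d) i‖ ≤ ∑ i ∈ T, (‖a‖ * ‖c i‖ + ‖b‖ * ‖d i‖) := by
          gcongr with i
          simpa using norm_add_le (a • c i) (b • d i)
      _ = ‖a‖ * ∑ i ∈ T, ‖c i‖ + ‖b‖ * ∑ i ∈ T, ‖d i‖ := by
          simp [Finset.sum_add_distrib, Finset.mul_sum]
      _ ≤ ‖a‖ * 1 + ‖b‖ * 1 := by gcongr
      _ = 1 := by linarith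

theorem exists_mem_absConvexHull_norm_sub_lt [SeminormedAddCommGroup E] [NormedSpace 𝕜 E]
    [NormedSpace ℝ E] [IsScalarTower ℝ 𝕜 E] {s t : Set E} {η ρ : ℝ}
    (h : ∀ x ∈ s, ∃ y ∈ absConvexHull 𝕜 t, ‖x - y‖ ≤ η) (hη : η < ρ) {x : E}
    (hx : x ∈ closedAbsConvexHull 𝕜 s) : ∃ y ∈ absConvexHull 𝕜 t, ‖x - y‖ < ρ := by
  -- This neighbourhood of the hull need not be closed, hence the passage from `η` to `ρ`.
  have habs : AbsConvex 𝕜 (absConvexHull 𝕜 t + Metric.closedBall (0 : E) η) :=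
    ⟨balanced_absConvexHull.add balanced_closedBall_zero,
      convex_absConvexHull.add (convex_RCLike_iff_convex_real.mpr (convex_closedBall 0 η))⟩
  have hsub : s ⊆ absConvexHull 𝕜 t + Metric.closedBall (0 : E) η := fun x hx ↦ by
    obtain ⟨y, hy, hxy⟩ := h x hx
    exact ⟨y, hy, x - y, by simpa using hxy, by simp⟩
  have hx' := closedAbsConvexHull_min (hsub.trans subset_closure) habs.closure isClosed_closure hx
  obtain ⟨_, ⟨y, hy, r, hr, rfl⟩, hdist⟩ := Metric.mem_closure_iff.mp hx' (ρ - η) (by linarith)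
  refine ⟨y, hy, ?_⟩
  rw [mem_closedBall_zero_iff] at hr
  dsimp only at hdist
  rw [dist_eq_norm, ← sub_sub] at hdist
  linarith [norm_le_norm_sub_add (x - y) r]

end AbsConvex

section SinePowers

open scoped Real

/-- The frequency of the `j`-th term in the binomial expansion of `(exp x ± exp (-x)) ^ l`, and so
of the `l`-th powers of `sin` and `cosh`. -/
def binomialFreq (l j : ℕ) : ℤ := 2 * j - l

theorem sin_pow_eq_sum_exp (z : ℂ) (l : ℕ) :
    Complex.sin z ^ l = ∑ j ∈ Finset.range (l + 1),
      (-1) ^ (l - j) * l.choose j / (2 * Complex.I) ^ l *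
        Complex.exp (binomialFreq l j * (z * Complex.I)) := by
  have hsin : Complex.sin z =
      (Complex.exp (z * Complex.I) + -Complex.exp (-(z * Complex.I))) / (2 * Complex.I) := by
    rw [eq_div_iff (by simp)]
    have htwo := Complex.two_sin z
    rw [neg_mul] at htwo
    linear_combination Complex.I * htwo +
      (Complex.exp (-(z * Complex.I)) - Complex.exp (z * Complex.I)) * Complex.I_mul_I
  rw [hsin, div_pow, add_pow, Finset.sum_div]
  refine Finset.sum_congr rfl fun j hj ↦ ?_
  have hj' : j ≤ l := Finset.mem_range_succ_iff.mp hj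
  have hexp : Complex.exp (binomialFreq l j * (z * Complex.I)) =
      Complex.exp (z * Complex.I) ^ j * Complex.exp (-(z * Complex.I)) ^ (l - j) := by
    rw [← Complex.exp_nat_mul, ← Complex.exp_nat_mul, ← Complex.exp_add]
    push_cast [binomialFreq, Nat.cast_sub hj']
    ring_nf
  rw [hexp, neg_pow]
  ring

theorem sum_choose_div_two_pow_mul_exp (t : ℝ) (l : ℕ) :
    ∑ j ∈ Finset.range (l + 1), l.choose j / 2 ^ l * Real.exp (t * binomialFreq l j) =
      Real.cosh t ^ l := by
  rw [Real.cosh_eq, div_pow, add_pow, Finset.sum_div]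
  refine Finset.sum_congr rfl fun j hj ↦ ?_
  have hj' : j ≤ l := Finset.mem_range_succ_iff.mp hj
  have hexp : Real.exp (t * binomialFreq l j) = Real.exp t ^ j * Real.exp (-t) ^ (l - j) := by
    rw [← Real.exp_nat_mul, ← Real.exp_nat_mul, ← Real.exp_add]
    push_cast [binomialFreq, Nat.cast_sub hj']
    ring_nf
  rw [hexp]
  ring

theorem sum_choose_div_two_pow_mul_cosh (t : ℝ) (l : ℕ) :
    ∑ j ∈ Finset.range (l + 1), l.choose j / 2 ^ l * Real.cosh (t * binomialFreq l j) =
      Real.cosh t ^ l := by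
  have hpos := sum_choose_div_two_pow_mul_exp t l
  have hneg := sum_choose_div_two_pow_mul_exp (-t) l
  rw [Real.cosh_neg] at hneg
  simp_rw [Real.cosh_eq (t * _), mul_div_assoc', mul_add, ← Finset.sum_div, Finset.sum_add_distrib,
    ← neg_mul, hpos, hneg]
  ring

theorem sum_choose_div_two_pow_tail_le {t : ℝ} (ht : 0 ≤ t) (l : ℕ) (M : ℤ) :
    ∑ j ∈ Finset.range (l + 1) with M < |binomialFreq l j|, (l.choose j / 2 ^ l : ℝ) ≤
      2 * Real.exp (l * (t ^ 2 / 2) - t * M) := by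
  have hcosh {m : ℤ} (hm : M < |m|) : Real.exp (t * M) ≤ 2 * Real.cosh (t * m) := by
    have hm' : (M : ℝ) ≤ |(m : ℝ)| := mod_cast hm.le
    calc Real.exp (t * M) ≤ Real.exp |t * m| := by
          rw [abs_mul, abs_of_nonneg ht]
          gcongr
      _ ≤ 2 * Real.cosh (t * m) := by
          rw [← Real.cosh_abs (t * m), Real.cosh_eq]
          linarith [Real.exp_pos (-|t * m|)]
  have hsum : (∑ j ∈ Finset.range (l + 1) with M < |binomialFreq l j|, (l.choose j / 2 ^ l : ℝ)) *
      Real.exp (t * M) ≤ 2 * Real.exp (t ^ 2 / 2) ^ l := by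
    rw [Finset.sum_mul]
    calc ∑ j ∈ Finset.range (l + 1) with M < |binomialFreq l j|,
          (l.choose j / 2 ^ l : ℝ) * Real.exp (t * M)
        ≤ ∑ j ∈ Finset.range (l + 1) with M < |binomialFreq l j|,
          l.choose j / 2 ^ l * (2 * Real.cosh (t * binomialFreq l j)) := by
          gcongr with j hj
          exact hcosh (Finset.mem_filter.mp hj).2
      _ ≤ ∑ j ∈ Finset.range (l + 1),
          l.choose j / 2 ^ l * (2 * Real.cosh (t * binomialFreq l j)) :=
          Finset.sum_le_sum_of_subset_of_nonneg (Finset.filter_subset _ _)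
            fun _ _ _ ↦ by positivity
      _ = 2 * Real.cosh t ^ l := by
          simp_rw [mul_left_comm _ (2 : ℝ), ← Finset.mul_sum, sum_choose_div_two_pow_mul_cosh]
      _ ≤ 2 * Real.exp (t ^ 2 / 2) ^ l := by
          gcongr
          exact Real.cosh_le_exp_half_sq t
  rwa [Real.exp_sub, Real.exp_nat_mul, mul_div_assoc', le_div_iff₀ (Real.exp_pos _)]

theorem abs_sin_pi_mul_div_two_le {y : ℝ} (hy : |y| ≤ 1) :
    |Real.sin (π * y / 2)| ≤ Real.exp (-((1 - |y|) ^ 2 / 2)) := by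
  have hsin : |Real.sin (π * y / 2)| = Real.cos (π * (1 - |y|) / 2) := by
    have : 0 ≤ Real.sin (π * |y| / 2) :=
      Real.sin_nonneg_of_nonneg_of_le_pi (by positivity) (by nlinarith [Real.pi_pos])
    rw [show π * (1 - |y|) / 2 = π / 2 - π * |y| / 2 by ring, Real.cos_pi_div_two_sub]
    obtain h | h := abs_choice y <;> rw [h] at this ⊢
    · exact abs_of_nonneg this
    · rw [← abs_of_nonneg this, mul_neg, neg_div, Real.sin_neg, abs_neg]
  have hangle : |π * (1 - |y|) / 2| ≤ π := by
    rw [abs_of_nonneg (by have := Real.pi_pos; have := sub_nonneg.mpr hy; positivity)]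
    nlinarith [Real.pi_pos, abs_nonneg y]
  calc |Real.sin (π * y / 2)| = Real.cos (π * (1 - |y|) / 2) := hsin
    _ ≤ 1 - 2 / π ^ 2 * (π * (1 - |y|) / 2) ^ 2 := Real.cos_le_one_sub_mul_cos_sq hangle
    _ = -((1 - |y|) ^ 2 / 2) + 1 := by field_simp; ring
    _ ≤ Real.exp (-((1 - |y|) ^ 2 / 2)) := Real.add_one_le_exp _

end SinePowers

section ContinuousFunctions

open scoped Real ComplexOrder

variable {s : Set ℝ}

/-- The coordinate function of `s ⊆ ℝ`, as a complex-valued continuous function. -/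
def coordinate (s : Set ℝ) : C(s, ℂ) := ⟨fun y ↦ ((y : ℝ) : ℂ), by fun_prop⟩

/-- The function `y ↦ sin (π * y / 2)` on `s ⊆ ℝ`, whose arcsine is `π * y / 2` on `[-1, 1]`. -/
noncomputable def sinHalfPi (s : Set ℝ) : C(s, ℂ) :=
  ⟨fun y ↦ (Real.sin (π * y / 2) : ℂ), by fun_prop⟩

/-- The Fourier mode `y ↦ exp (I * π * m * y / 2)` of period dividing `4`, on `s ⊆ ℝ`. -/
noncomputable def fourierMode (s : Set ℝ) (m : ℤ) : C(s, ℂ) :=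
  ⟨fun y ↦ Complex.exp (Complex.I * π * m * (y : ℝ) / 2), by fun_prop⟩

theorem norm_sinHalfPi_le [CompactSpace s] : ‖sinHalfPi s‖ ≤ 1 :=
  (ContinuousMap.norm_le _ zero_le_one).mpr fun y ↦ by
    simpa [sinHalfPi, -Complex.ofReal_sin] using Real.abs_sin_le_one (π * y / 2)

theorem hasSum_arcsinCoeff_smul_sinHalfPi_pow [CompactSpace s] (hs : s ⊆ Set.Ioo (-1) 1) :
    HasSum (fun n ↦ ((2 / π * arcsinCoeff n : ℝ) : ℂ) • sinHalfPi s ^ (2 * n + 1))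
      (coordinate s) := by
  have hsummable : Summable fun n ↦
      ((2 / π * arcsinCoeff n : ℝ) : ℂ) • sinHalfPi s ^ (2 * n + 1) := by
    have hcoeff : Summable arcsinCoeff := summable_of_sum_le arcsinCoeff_nonneg sum_arcsinCoeff_le
    refine (hcoeff.mul_left (2 / π)).of_norm_bounded fun n ↦ ?_
    rw [norm_smul, Complex.norm_real, Real.norm_of_nonneg
      (mul_nonneg (by positivity) (arcsinCoeff_nonneg n))]
    refine mul_le_of_le_one_right (mul_nonneg (by positivity) (arcsinCoeff_nonneg n)) ?_
    exact (norm_pow_le' _ (by positivity)).trans (pow_le_one₀ (norm_nonneg _) norm_sinHalfPi_le)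
  convert hsummable.hasSum
  ext y
  refine HasSum.unique ?_ (ContinuousMap.hasSum_apply hsummable.hasSum y)
  simpa [coordinate, sinHalfPi, mul_assoc] using
    (hasSum_arcsinCoeff_mul_sin_pow (abs_lt.mpr (hs y.2))).mapL Complex.ofRealCLM

theorem coordinate_mem_closedAbsConvexHull_powers_sinHalfPi [CompactSpace s]
    (hs : s ⊆ Set.Ioo (-1) 1) :
    coordinate s ∈ closedAbsConvexHull ℂ (Submonoid.powers (sinHalfPi s) : Set C(s, ℂ)) := by
  refine isClosed_closedAbsConvexHull.mem_of_tendsto (hasSum_arcsinCoeff_smul_sinHalfPi_pow hs)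
    (.of_forall fun t ↦ sum_smul_mem_of_absConvex absConvex_convexClosedHull
      ⟨1, subset_closedAbsConvexHull (Submonoid.powers _).one_mem⟩ ?_
      fun n _ ↦ subset_closedAbsConvexHull ⟨2 * n + 1, rfl⟩)
  calc ∑ n ∈ t, ‖((2 / π * arcsinCoeff n : ℝ) : ℂ)‖ = 2 / π * ∑ n ∈ t, arcsinCoeff n := by
        simp_rw [Complex.norm_real, Finset.mul_sum]
        exact Finset.sum_congr rfl fun n _ ↦
          Real.norm_of_nonneg (mul_nonneg (by positivity) (arcsinCoeff_nonneg n))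
    _ ≤ 2 / π * (π / 2) := by gcongr; exact sum_arcsinCoeff_le t
    _ = 1 := by field_simp

theorem sinHalfPi_pow_eq_sum_smul_fourierMode (s : Set ℝ) (l : ℕ) :
    sinHalfPi s ^ l = ∑ j ∈ Finset.range (l + 1),
      ((-1) ^ (l - j) * l.choose j / (2 * Complex.I) ^ l) • fourierMode s (binomialFreq l j) := by
  ext y
  simp only [sinHalfPi, fourierMode, ContinuousMap.coe_pow, Pi.pow_apply, ContinuousMap.coe_mk,
    ContinuousMap.coe_sum, Finset.sum_apply, ContinuousMap.coe_smul, Pi.smul_apply, smul_eq_mul,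
    Complex.ofReal_sin]
  rw [sin_pow_eq_sum_exp]
  refine Finset.sum_congr rfl fun j _ ↦ ?_
  push_cast
  ring_nf

theorem norm_fourierMode_le [CompactSpace s] (m : ℤ) : ‖fourierMode s m‖ ≤ 1 := by
  refine (ContinuousMap.norm_le _ zero_le_one).mpr fun y ↦ le_of_eq ?_
  have : Complex.I * π * m * (y : ℝ) / 2 = ((π * m * y / 2 : ℝ) : ℂ) * Complex.I := by
    push_cast; ring
  simp only [fourierMode, ContinuousMap.coe_mk, this, Complex.norm_exp_ofReal_mul_I]

theorem exists_norm_sinHalfPi_pow_sub_le_tail [CompactSpace s] (l : ℕ) {M : ℤ} (hM : 0 ≤ M) :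
    ∃ u ∈ absConvexHull ℂ (fourierMode s '' Finset.Icc (-M) M), ‖sinHalfPi s ^ l - u‖ ≤
      ∑ j ∈ Finset.range (l + 1) with M < |binomialFreq l j|, (l.choose j / 2 ^ l : ℝ) := by
  set w : ℕ → ℂ := fun j ↦ (-1) ^ (l - j) * l.choose j / (2 * Complex.I) ^ l
  have hw (j : ℕ) : ‖w j‖ = l.choose j / 2 ^ l := by simp [w]
  have hw_sum : ∑ j ∈ Finset.range (l + 1), ‖w j‖ = 1 := by
    simp_rw [hw, ← Finset.sum_div]
    rw [div_eq_one_iff_eq (by positivity)]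
    exact_mod_cast Nat.sum_range_choose l
  refine ⟨∑ j ∈ Finset.range (l + 1) with ¬ M < |binomialFreq l j|,
    w j • fourierMode s (binomialFreq l j), ?_, ?_⟩
  · refine sum_smul_mem_of_absConvex absConvex_absConvexHull ?_ ?_ fun j hj ↦ ?_
    · exact ⟨fourierMode s 0, subset_absConvexHull ⟨0, by simpa using hM, rfl⟩⟩
    · exact (Finset.sum_le_sum_of_subset_of_nonneg (Finset.filter_subset _ _)
        fun _ _ _ ↦ norm_nonneg _).trans hw_sum.le
    · refine subset_absConvexHull ⟨_, ?_, rfl⟩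
      simpa [← abs_le] using (Finset.mem_filter.mp hj).2
  · rw [sinHalfPi_pow_eq_sum_smul_fourierMode, ← Finset.sum_filter_add_sum_filter_not _
      (fun j ↦ M < |binomialFreq l j|), add_sub_cancel_right]
    refine norm_sum_le_of_le _ fun j _ ↦ ?_
    rw [← hw, norm_smul]
    exact mul_le_of_le_one_right (norm_nonneg _) (norm_fourierMode_le _)

theorem norm_sinHalfPi_pow_le [CompactSpace s] {δ : ℝ} (hδ : 0 ≤ δ)
    (hs : s ⊆ Set.Icc (-1 + δ) (1 - δ)) (l : ℕ) :
    ‖sinHalfPi s ^ l‖ ≤ Real.exp (-(l * (δ ^ 2 / 2))) := by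
  refine (ContinuousMap.norm_le _ (Real.exp_pos _).le).mpr fun y ↦ ?_
  have hy : |(y : ℝ)| ≤ 1 - δ := abs_le.mpr (by simpa [neg_add_eq_sub] using hs y.2)
  calc ‖(sinHalfPi s ^ l) y‖ = |Real.sin (π * y / 2)| ^ l := by
        simp [sinHalfPi, -Complex.ofReal_sin]
    _ ≤ Real.exp (-(δ ^ 2 / 2)) ^ l := by
        gcongr
        refine (abs_sin_pi_mul_div_two_le (hy.trans (by linarith))).trans ?_
        gcongr
        linarith
    _ = Real.exp (-(l * (δ ^ 2 / 2))) := by rw [← Real.exp_nat_mul, mul_neg]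

theorem exists_norm_sinHalfPi_pow_sub_le [CompactSpace s] {δ Λ : ℝ} {M : ℤ} (hδ : 0 ≤ δ)
    (hs : s ⊆ Set.Icc (-1 + δ) (1 - δ)) (hM : 0 ≤ M) (hΛ : 2 * Λ ≤ δ * M) (l : ℕ) :
    ∃ u ∈ absConvexHull ℂ (fourierMode s '' Finset.Icc (-M) M),
      ‖sinHalfPi s ^ l - u‖ ≤ 2 * Real.exp (-Λ) := by
  obtain hl | hl := le_total Λ (l * (δ ^ 2 / 2))
  · refine ⟨0, balanced_absConvexHull.zero_mem (Set.Nonempty.absConvexHull ?_), ?_⟩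
    · exact Set.Nonempty.image _ ⟨0, by simpa using hM⟩
    · rw [sub_zero]
      calc _ ≤ Real.exp (-(l * (δ ^ 2 / 2))) := norm_sinHalfPi_pow_le hδ hs l
        _ ≤ Real.exp (-Λ) := by gcongr
        _ ≤ 2 * Real.exp (-Λ) := by linarith [Real.exp_pos (-Λ)]
  · obtain ⟨u, hu, hdist⟩ := exists_norm_sinHalfPi_pow_sub_le_tail (s := s) l hM
    refine ⟨u, hu, hdist.trans ((sum_choose_div_two_pow_tail_le hδ l M).trans ?_)⟩
    gcongr
    linarith

theorem exists_norm_sum_coordinate_pow_sub_lt [CompactSpace s] {ι : Type*} {T : Finset ι}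
    {b : ι → ℂ} {δ Λ η : ℝ} {M : ℤ} (hb : ∑ i ∈ T, ‖b i‖ ≤ 1) (hδ : 0 < δ)
    (hs : s ⊆ Set.Icc (-1 + δ) (1 - δ)) (hM : 0 ≤ M) (hΛ : 2 * Λ ≤ δ * M)
    (hη : 2 * Real.exp (-Λ) < η) (k : ι → ℕ) :
    ∃ c : ℤ → ℂ, ∑ m ∈ Finset.Icc (-M) M, ‖c m‖ ≤ 1 ∧
      ‖∑ i ∈ T, b i • coordinate s ^ k i - ∑ m ∈ Finset.Icc (-M) M, c m • fourierMode s m‖ < η := by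
  set S : Submonoid C(s, ℂ) := Submonoid.powers (sinHalfPi s)
  have hcoord : coordinate s ∈ closedAbsConvexHull ℂ (S : Set C(s, ℂ)) :=
    coordinate_mem_closedAbsConvexHull_powers_sinHalfPi
      (hs.trans <| Set.Icc_subset_Ioo (by linarith) (by linarith))
  have hpoly : ∑ i ∈ T, b i • coordinate s ^ k i ∈ closedAbsConvexHull ℂ (S : Set C(s, ℂ)) :=
    sum_smul_mem_of_absConvex absConvex_convexClosedHull ⟨_, hcoord⟩ hb fun i _ ↦
      pow_mem_closedAbsConvexHull S hcoord (k i)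
  have hpow : ∀ x ∈ (S : Set C(s, ℂ)),
      ∃ u ∈ absConvexHull ℂ (fourierMode s '' Finset.Icc (-M) M),
        ‖x - u‖ ≤ 2 * Real.exp (-Λ) := by
    rintro _ ⟨l, rfl⟩
    exact exists_norm_sinHalfPi_pow_sub_le hδ.le hs hM hΛ l
  obtain ⟨u, hu, hdist⟩ := exists_mem_absConvexHull_norm_sub_lt hpow hη hpoly
  obtain ⟨c, hc, rfl⟩ := exists_sum_smul_eq_of_mem_absConvexHull hu
  exact ⟨c, hc, hdist⟩

theorem exists_norm_sum_pow_sub_sum_exp_le [CompactSpace s] {ι : Type*} {T : Finset ι} {b : ι → ℂ}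
    {B δ Λ η : ℝ} {M : ℤ} (hB : 0 < B) (hb : ∑ i ∈ T, ‖b i‖ ≤ B) (hδ : 0 < δ)
    (hs : s ⊆ Set.Icc (-1 + δ) (1 - δ)) (hM : 0 ≤ M) (hΛ : 2 * Λ ≤ δ * M)
    (hη : 2 * Real.exp (-Λ) < η) (k : ι → ℕ) :
    ∃ c : ℤ → ℂ, ∑ m ∈ Finset.Icc (-M) M, ‖c m‖ ≤ B ∧
      ∀ y ∈ s, ‖∑ i ∈ T, b i * (y : ℂ) ^ k i -
        ∑ m ∈ Finset.Icc (-M) M, c m * Complex.exp (Complex.I * π * m * y / 2)‖ ≤ B * η := by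
  have hb_div : ∑ i ∈ T, ‖b i / B‖ ≤ 1 := by
    simp_rw [norm_div, Complex.norm_real, Real.norm_of_nonneg hB.le, ← Finset.sum_div]
    exact (div_le_one hB).mpr hb
  obtain ⟨c, hc, hdist⟩ := exists_norm_sum_coordinate_pow_sub_lt hb_div hδ hs hM hΛ hη k
  refine ⟨fun m ↦ B * c m, ?_, fun y hy ↦ ?_⟩
  · simpa [← Finset.mul_sum, abs_of_pos hB] using mul_le_of_le_one_right hB.le hc
  · have hB_ne : (B : ℂ) ≠ 0 := mod_cast hB.ne'
    have hscale : ∑ i ∈ T, b i * (y : ℂ) ^ k i -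
        ∑ m ∈ Finset.Icc (-M) M, B * c m * Complex.exp (Complex.I * π * m * y / 2) =
        B * (∑ i ∈ T, (b i / B) • coordinate s ^ k i -
          ∑ m ∈ Finset.Icc (-M) M, c m • fourierMode s m) ⟨y, hy⟩ := by
      simp only [ContinuousMap.sub_apply, ContinuousMap.sum_apply, ContinuousMap.smul_apply,
        ContinuousMap.pow_apply, smul_eq_mul, coordinate, fourierMode, ContinuousMap.coe_mk,
        mul_sub, Finset.mul_sum, ← mul_assoc, mul_div_cancel₀ _ hB_ne]
    rw [hscale, norm_mul, Complex.norm_real, Real.norm_of_nonneg hB.le]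
    gcongr
    exact (ContinuousMap.norm_coe_le_norm _ _).trans hdist.le

end ContinuousFunctions

/-- (Low-weight approximation by Fourier series.) Let `δ' ∈ (0,1)`,
`ε ∈ (0,1)`, `K ≥ 1`, `b₀,…,b_{K−1} ∈ ℂ` with `B₁ = Σ |bₖ| > 0`, and suppose
`g : [−1+δ', 1−δ'] → ℂ` satisfies `|g(y) − Σ bₖ yᵏ| ≤ ε/12` there. Then with
`M = max(2⌈(1/δ')·log(12B₁/ε)⌉, 0)` there exist `c_{−M},…,c_M ∈ ℂ` with
`Σ |cₘ| ≤ B₁` and `|g(y) − Σₘ cₘ e^{iπmy/2}| ≤ ε/3` on `[−1+δ', 1−δ']`. -/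
theorem fourier_low_weight_approx (δ' ε : ℝ) (hδ0 : 0 < δ') (hδ1 : δ' < 1)
    (hε0 : 0 < ε) (hε1 : ε < 1) (K : ℕ) (hK : 1 ≤ K) (b : ℕ → ℂ)
    (hB : 0 < ∑ k ∈ Finset.range K, ‖b k‖) (g : ℝ → ℂ)
    (hg : ∀ y ∈ Set.Icc (-1 + δ') (1 - δ'),
      ‖g y - ∑ k ∈ Finset.range K, b k * (y : ℂ) ^ k‖ ≤ ε / 12) :
    ∃ c : ℤ → ℂ,
      (∑ m ∈ Finset.Icc
          (-(max (2 * ⌈(1 / δ') * Real.log (12 * (∑ k ∈ Finset.range K, ‖b k‖) / ε)⌉) 0))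
          (max (2 * ⌈(1 / δ') * Real.log (12 * (∑ k ∈ Finset.range K, ‖b k‖) / ε)⌉) 0),
        ‖c m‖) ≤ ∑ k ∈ Finset.range K, ‖b k‖ ∧
      ∀ y ∈ Set.Icc (-1 + δ') (1 - δ'),
        ‖g y - ∑ m ∈ Finset.Icc
            (-(max (2 * ⌈(1 / δ') * Real.log (12 * (∑ k ∈ Finset.range K, ‖b k‖) / ε)⌉) 0))
            (max (2 * ⌈(1 / δ') * Real.log (12 * (∑ k ∈ Finset.range K, ‖b k‖) / ε)⌉) 0),
          c m * Complex.exp (Complex.I * Real.pi * (m : ℂ) * (y : ℂ) / 2)‖ ≤ ε / 3 := by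
  set B := ∑ k ∈ Finset.range K, ‖b k‖
  set Λ := Real.log (12 * B / ε)
  set M := max (2 * ⌈1 / δ' * Λ⌉) 0
  have hΛ : 2 * Λ ≤ δ' * M := calc
    2 * Λ = δ' * (2 * (1 / δ' * Λ)) := by field_simp
    _ ≤ δ' * (2 * ⌈1 / δ' * Λ⌉ : ℤ) := by push_cast; gcongr; exact Int.le_ceil _
    _ ≤ δ' * M := by gcongr; exact le_max_left _ _
  have hexp : Real.exp (-Λ) = ε / (12 * B) := by
    rw [Real.exp_neg, Real.exp_log (by positivity), inv_div]
  obtain ⟨c, hc, happrox⟩ := exists_norm_sum_pow_sub_sum_exp_le hB le_rfl hδ0 .rfl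
    (le_max_right _ _) hΛ (η := 3 * Real.exp (-Λ)) (by linarith [Real.exp_pos (-Λ)]) id
  refine ⟨c, hc, fun y hy ↦ ?_⟩
  have hη : B * (3 * Real.exp (-Λ)) = ε / 4 := by rw [hexp]; field_simp; norm_num
  refine (norm_sub_le_norm_sub_add_norm_sub _ _ _).trans
    ((add_le_add (hg y hy) (happrox y hy)).trans_eq ?_)
  rw [hη]
  ring
end

section
/- There exists a universal constant C > 0 with the following property. For all real numbers t > 0, λ > 0, Γ with 0 < Γ ≤ λ, and ε ∈ (0, 1), there exist polynomials P_cos and P_sin with complex coefficients of degree at most C·(t·√(λΓ) + √(λ/Γ)·(1 + log(1/ε))) such that sup_{x ∈ [−1,1]} |P_cos(x)| ≤ 1 and sup_{x ∈ [−1,1]} |P_sin(x)| ≤ 1, and for all x with |x| ≤ √(Γ/λ): |P_cos(x) − cos(tλx²)| ≤ 2ε and |P_sin(x) − sin(tλx²)| ≤ 2ε. -/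
/-!
With `δ = √(Γ/λ)`, the two targets are the real and imaginary parts of `exp (i τ s)` for `τ = tΓ`
and `s = (x / δ)²`. Its Taylor polynomial of degree `n ≈ τ + log (1 / ε)` in `s` is accurate as
long as `s` is bounded, but it may grow like `exp τ * s ^ n` beyond. It is therefore multiplied by
a polynomial window of degree `O(n / δ)` which is `ε`-close to `1` for `|x| ≤ δ`, stays in `[0, 1]`,
and decays like `(64 / s) ^ (2 * n)`. The window is obtained from the square of a Dirichlet kernel,
which is merely at least `3 / 4` for `|x| ≤ δ` and at most `16 / s` on `[-1, 1]`, by sharpening it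
with the polynomial computing the probability that a biased coin shows heads in at least half of
`4 * n` tosses.
-/

open Polynomial

section LinearImage

variable {R A B : Type*} [CommSemiring R] [Semiring A] [Algebra R A] [Semiring B] [Algebra R B]

lemma exists_eval_algebraMap_eq_linearMap (L : A →ₗ[R] B) (p : A[X]) :
    ∃ q : B[X], q.natDegree ≤ p.natDegree ∧
      ∀ x : R, q.eval (algebraMap R B x) = L (p.eval (algebraMap R A x)) := by
  refine ⟨∑ i ∈ Finset.range (p.natDegree + 1), C (L (p.coeff i)) * X ^ i, ?_, fun x => ?_⟩
  · refine natDegree_sum_le_of_forall_le _ _ fun i hi => ?_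
    exact (natDegree_C_mul_X_pow_le _ _).trans (Finset.mem_range_succ_iff.mp hi)
  · rw [eval_finsetSum, eval_eq_sum_range, map_sum]
    refine Finset.sum_congr rfl fun i _ => ?_
    rw [eval_C_mul, eval_X_pow, ← map_pow, ← map_pow, ← Algebra.commutes, ← Algebra.commutes,
      ← Algebra.smul_def, ← Algebra.smul_def, map_smul]

end LinearImage

lemma norm_inv_smul_smul_sub_le {E : Type*} [SeminormedAddCommGroup E] [NormedSpace ℝ E]
    {q f : E} {w η : ℝ} (hw₀ : 0 ≤ w) (hw₁ : w ≤ 1) (hη : 1 - w ≤ η) (hf : ‖f‖ ≤ 1)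
    (hqf : ‖q - f‖ ≤ η) : ‖(1 + η)⁻¹ • w • q - f‖ ≤ 3 * η := by
  have hη₀ : 0 ≤ η := (norm_nonneg _).trans hqf
  have h_split : (1 + η)⁻¹ • w • q - f = (1 + η)⁻¹ • (w • (q - f) + (w - 1 - η) • f) := by
    match_scalars <;> field_simp
    ring
  have h_near : ‖w • (q - f)‖ ≤ η := by
    rw [norm_smul, Real.norm_of_nonneg hw₀]
    exact (mul_le_of_le_one_left (norm_nonneg _) hw₁).trans hqf
  have h_damp : ‖(w - 1 - η) • f‖ ≤ 2 * η := by
    rw [norm_smul, Real.norm_of_nonpos (by linarith)]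
    exact (mul_le_of_le_one_right (by linarith) hf).trans (by linarith)
  rw [h_split, norm_smul, norm_inv, Real.norm_of_nonneg (by linarith)]
  calc (1 + η)⁻¹ * ‖w • (q - f) + (w - 1 - η) • f‖
      ≤ 1 * (η + 2 * η) := by
        gcongr
        · exact inv_le_one_of_one_le₀ (by linarith)
        · exact norm_add_le_of_le h_near h_damp
    _ = 3 * η := by ring

section Dirichlet

lemma abs_sin_int_mul_le (n : ℤ) (θ : ℝ) : |Real.sin (n * θ)| ≤ |(n : ℝ)| * |Real.sin θ| := by
  have h_nat (m : ℕ) : |Real.sin (m * θ)| ≤ m * |Real.sin θ| := by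
    induction m with
    | zero => simp
    | succ m ih =>
      calc |Real.sin ((m + 1 : ℕ) * θ)|
          = |Real.sin (m * θ) * Real.cos θ + Real.cos (m * θ) * Real.sin θ| := by
            rw [← Real.sin_add, Nat.cast_succ, add_one_mul]
        _ ≤ |Real.sin (m * θ)| * |Real.cos θ| + |Real.cos (m * θ)| * |Real.sin θ| := by
            rw [← abs_mul, ← abs_mul]
            exact abs_add_le _ _
        _ ≤ m * |Real.sin θ| * 1 + 1 * |Real.sin θ| := by
            gcongr
            exacts [Real.abs_cos_le_one _, Real.abs_cos_le_one _]
        _ = (m + 1 : ℕ) * |Real.sin θ| := by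
            push_cast
            ring
  obtain ⟨m, rfl | rfl⟩ := n.eq_nat_or_neg <;> simpa using h_nat m

/-- The Dirichlet kernel `(∑ |j| ≤ M, cos (2 j θ)) / (2 M + 1)`, normalised to be `1` at `θ = 0`,
as a polynomial in `sin θ`. The Chebyshev index `j` is written `k - M` with `k` natural. -/
noncomputable def dirichletPoly (M : ℕ) : ℝ[X] :=
  C (2 * M + 1 : ℝ)⁻¹ *
    ∑ k ∈ Finset.range (2 * M + 1), (Chebyshev.T ℝ (k - M)).comp (1 - C 2 * X ^ 2)

lemma natDegree_dirichletPoly_le (M : ℕ) : (dirichletPoly M).natDegree ≤ 2 * M := by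
  refine (natDegree_C_mul_le _ _).trans (natDegree_sum_le_of_forall_le _ _ fun k hk => ?_)
  have h_quad : (1 - C 2 * X ^ 2 : ℝ[X]).natDegree ≤ 2 := by compute_degree
  have h_index : ((k : ℤ) - M).natAbs ≤ M := by grind
  calc ((Chebyshev.T ℝ (k - M)).comp (1 - C 2 * X ^ 2)).natDegree
      ≤ ((k : ℤ) - M).natAbs * (1 - C 2 * X ^ 2 : ℝ[X]).natDegree := by
        rw [← Chebyshev.natDegree_T ℝ]
        exact natDegree_comp_le
    _ ≤ M * 2 := Nat.mul_le_mul h_index h_quad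
    _ = 2 * M := mul_comm _ _

lemma mul_eval_dirichletPoly_sin (M : ℕ) (θ : ℝ) :
    (2 * M + 1) * (dirichletPoly M).eval (Real.sin θ) =
      ∑ k ∈ Finset.range (2 * M + 1), Real.cos (2 * ((k - M : ℤ) * θ)) := by
  have h_double : 1 - 2 * Real.sin θ ^ 2 = Real.cos (2 * θ) := by
    rw [Real.cos_two_mul, Real.cos_sq']
    ring
  rw [dirichletPoly, eval_C_mul, mul_inv_cancel_left₀ (by positivity), eval_finsetSum]
  refine Finset.sum_congr rfl fun k _ => ?_
  rw [eval_comp, eval_sub, eval_one, eval_C_mul, eval_pow, eval_X, h_double, Chebyshev.T_real_cos,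
    mul_left_comm]

lemma mul_sin_mul_eval_dirichletPoly_sin (M : ℕ) (θ : ℝ) :
    (2 * M + 1) * Real.sin θ * (dirichletPoly M).eval (Real.sin θ) =
      Real.sin ((2 * M + 1) * θ) := by
  let F (k : ℕ) : ℝ := Real.sin ((2 * (k - M) - 1) * θ)
  have h_step (k : ℕ) : 2 * Real.sin θ * Real.cos (2 * ((k - M : ℤ) * θ)) = F (k + 1) - F k := by
    rw [Real.sin_sub_sin]
    push_cast
    ring_nf
  have h_telescope : 2 * Real.sin θ * ((2 * M + 1) * (dirichletPoly M).eval (Real.sin θ)) =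
      2 * Real.sin ((2 * M + 1) * θ) := by
    rw [mul_eval_dirichletPoly_sin, Finset.mul_sum, Finset.sum_congr rfl fun k _ => h_step k,
      Finset.sum_range_sub, two_mul, sub_eq_add_neg, ← Real.sin_neg]
    simp only [F]
    push_cast
    ring_nf
  linarith

variable {x : ℝ} (M : ℕ)

lemma abs_eval_dirichletPoly_le_one (hx : x ∈ Set.Icc (-1) 1) :
    |(dirichletPoly M).eval x| ≤ 1 := by
  obtain ⟨θ, rfl⟩ : ∃ θ, Real.sin θ = x := ⟨Real.arcsin x, Real.sin_arcsin hx.1 hx.2⟩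
  have h_pos : (0 : ℝ) < 2 * M + 1 := by positivity
  refine le_of_mul_le_mul_left ?_ h_pos
  calc (2 * M + 1) * |(dirichletPoly M).eval (Real.sin θ)|
      = |∑ k ∈ Finset.range (2 * M + 1), Real.cos (2 * ((k - M : ℤ) * θ))| := by
        rw [← mul_eval_dirichletPoly_sin, abs_mul, abs_of_pos h_pos]
    _ ≤ ∑ k ∈ Finset.range (2 * M + 1), |Real.cos (2 * ((k - M : ℤ) * θ))| :=
        Finset.abs_sum_le_sum_abs _ _
    _ ≤ ∑ _k ∈ Finset.range (2 * M + 1), 1 :=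
        Finset.sum_le_sum fun _ _ => Real.abs_cos_le_one _
    _ = (2 * M + 1) * 1 := by simp

lemma abs_mul_eval_dirichletPoly_le_one (hx : x ∈ Set.Icc (-1) 1) :
    |(2 * M + 1) * x * (dirichletPoly M).eval x| ≤ 1 := by
  obtain ⟨θ, rfl⟩ : ∃ θ, Real.sin θ = x := ⟨Real.arcsin x, Real.sin_arcsin hx.1 hx.2⟩
  rw [mul_sin_mul_eval_dirichletPoly_sin]
  exact Real.abs_sin_le_one _

lemma one_sub_le_eval_dirichletPoly (hx : x ∈ Set.Icc (-1) 1) :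
    1 - 2 * (M * x) ^ 2 ≤ (dirichletPoly M).eval x := by
  obtain ⟨θ, rfl⟩ : ∃ θ, Real.sin θ = x := ⟨Real.arcsin x, Real.sin_arcsin hx.1 hx.2⟩
  have h_pos : (0 : ℝ) < 2 * M + 1 := by positivity
  have h_cos (k : ℕ) (hk : k ∈ Finset.range (2 * M + 1)) :
      1 - 2 * (M * Real.sin θ) ^ 2 ≤ Real.cos (2 * ((k - M : ℤ) * θ)) := by
    have h_index : |((k - M : ℤ) : ℝ)| ≤ |(M : ℝ)| := by
      rw [Nat.abs_cast, ← Int.cast_abs]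
      exact_mod_cast (show |(k - M : ℤ)| ≤ M by grind)
    have h_sin : Real.sin ((k - M : ℤ) * θ) ^ 2 ≤ (M * Real.sin θ) ^ 2 := by
      rw [sq_le_sq, abs_mul]
      exact (abs_sin_int_mul_le _ θ).trans (by gcongr)
    rw [Real.cos_two_mul, Real.cos_sq']
    linarith
  refine le_of_mul_le_mul_left ?_ h_pos
  calc (2 * M + 1) * (1 - 2 * (M * Real.sin θ) ^ 2)
      = ∑ _k ∈ Finset.range (2 * M + 1), (1 - 2 * (M * Real.sin θ) ^ 2) := by
        rw [Finset.sum_const, Finset.card_range, nsmul_eq_mul]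
        push_cast
        rfl
    _ ≤ ∑ k ∈ Finset.range (2 * M + 1), Real.cos (2 * ((k - M : ℤ) * θ)) :=
        Finset.sum_le_sum h_cos
    _ = (2 * M + 1) * (dirichletPoly M).eval (Real.sin θ) :=
        (mul_eval_dirichletPoly_sin M θ).symm

end Dirichlet

section Majority

lemma eval_bernsteinPolynomial {R : Type*} [CommRing R] (n j : ℕ) (v : R) :
    (bernsteinPolynomial R n j).eval v = n.choose j * (v ^ j * (1 - v) ^ (n - j)) := by
  simp [bernsteinPolynomial, mul_assoc]

lemma natDegree_bernsteinPolynomial_le {R : Type*} [CommRing R] {n j : ℕ} (hj : j ≤ n) :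
    (bernsteinPolynomial R n j).natDegree ≤ n := by
  have h_degree : (bernsteinPolynomial R n j).natDegree ≤ j + (n - j) := by
    unfold bernsteinPolynomial
    compute_degree
  exact h_degree.trans_eq (Nat.add_sub_of_le hj)

lemma eval_bernsteinPolynomial_nonneg (n j : ℕ) {v : ℝ} (hv : v ∈ Set.Icc 0 1) :
    0 ≤ (bernsteinPolynomial ℝ n j).eval v := by
  have := sub_nonneg.mpr hv.2
  have := hv.1
  rw [eval_bernsteinPolynomial]
  positivity

lemma sum_eval_bernsteinPolynomial_le {n : ℕ} {v c : ℝ} {s : Finset ℕ}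
    (hs : s ⊆ Finset.range (n + 1)) (hc : 0 ≤ c) (h : ∀ j ∈ s, v ^ j * (1 - v) ^ (n - j) ≤ c) :
    ∑ j ∈ s, (bernsteinPolynomial ℝ n j).eval v ≤ 2 ^ n * c :=
  calc ∑ j ∈ s, (bernsteinPolynomial ℝ n j).eval v
      ≤ ∑ j ∈ s, n.choose j * c := by
        refine Finset.sum_le_sum fun j hj => ?_
        rw [eval_bernsteinPolynomial]
        gcongr
        exact h j hj
    _ ≤ ∑ j ∈ Finset.range (n + 1), n.choose j * c :=
        Finset.sum_le_sum_of_subset_of_nonneg hs fun _ _ _ => by positivity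
    _ = 2 ^ n * c := by
        rw [← Finset.sum_mul]
        exact_mod_cast congrArg (fun m : ℕ => m * c) (Nat.sum_range_choose n)

/-- The probability that a coin showing heads with probability `v` shows at least `k` heads in
`2 k` tosses, as a polynomial in `v`. It pushes values above `1 / 2` to `1` and small values
to `0`. -/
noncomputable def majorityPoly (k : ℕ) : ℝ[X] :=
  ∑ j ∈ Finset.Ico k (2 * k + 1), bernsteinPolynomial ℝ (2 * k) j

lemma natDegree_majorityPoly_le (k : ℕ) : (majorityPoly k).natDegree ≤ 2 * k :=
  natDegree_sum_le_of_forall_le _ _ fun _ hj =>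
    natDegree_bernsteinPolynomial_le (Nat.lt_succ_iff.mp (Finset.mem_Ico.mp hj).2)

lemma one_sub_eval_majorityPoly (k : ℕ) (v : ℝ) :
    1 - (majorityPoly k).eval v =
      ∑ j ∈ Finset.range k, (bernsteinPolynomial ℝ (2 * k) j).eval v := by
  rw [sub_eq_iff_eq_add, majorityPoly, eval_finsetSum,
    Finset.sum_range_add_sum_Ico _ (by lia), ← eval_finsetSum, bernsteinPolynomial.sum, eval_one]

variable {v : ℝ} (k : ℕ)

lemma eval_majorityPoly_nonneg (hv : v ∈ Set.Icc 0 1) : 0 ≤ (majorityPoly k).eval v := by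
  rw [majorityPoly, eval_finsetSum]
  exact Finset.sum_nonneg fun j _ => eval_bernsteinPolynomial_nonneg _ j hv

lemma eval_majorityPoly_le_one (hv : v ∈ Set.Icc 0 1) : (majorityPoly k).eval v ≤ 1 := by
  rw [← sub_nonneg, one_sub_eval_majorityPoly]
  exact Finset.sum_nonneg fun j _ => eval_bernsteinPolynomial_nonneg _ j hv

lemma eval_majorityPoly_le_pow (hv : v ∈ Set.Icc 0 1) :
    (majorityPoly k).eval v ≤ (4 * v) ^ k := by
  obtain ⟨hv₀, hv₁⟩ := hv
  have h_term (j : ℕ) (hj : j ∈ Finset.Ico k (2 * k + 1)) :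
      v ^ j * (1 - v) ^ (2 * k - j) ≤ v ^ k :=
    (mul_le_of_le_one_right (by positivity) (pow_le_one₀ (by linarith) (by linarith))).trans
      (pow_le_pow_of_le_one hv₀ hv₁ (Finset.mem_Ico.mp hj).1)
  calc (majorityPoly k).eval v
      = ∑ j ∈ Finset.Ico k (2 * k + 1), (bernsteinPolynomial ℝ (2 * k) j).eval v := by
        rw [majorityPoly, eval_finsetSum]
    _ ≤ 2 ^ (2 * k) * v ^ k :=
        sum_eval_bernsteinPolynomial_le (by grind) (by positivity) h_term
    _ = (4 * v) ^ k := by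
        rw [pow_mul, ← mul_pow]
        norm_num

lemma one_sub_eval_majorityPoly_le_pow (hv : v ∈ Set.Icc (1 / 2) 1) :
    1 - (majorityPoly k).eval v ≤ (4 * (v * (1 - v))) ^ k := by
  obtain ⟨hv_half, hv₁⟩ := hv
  have : 0 ≤ v := by linarith
  have : 0 ≤ 1 - v := by linarith
  have h_term (j : ℕ) (hj : j ∈ Finset.range k) :
      v ^ j * (1 - v) ^ (2 * k - j) ≤ (v * (1 - v)) ^ k := by
    have hjk : j ≤ k := (Finset.mem_range.mp hj).le
    calc v ^ j * (1 - v) ^ (2 * k - j)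
        = v ^ j * (1 - v) ^ (k - j) * (1 - v) ^ k := by
          rw [mul_assoc, ← pow_add]
          congr 2
          lia
      _ ≤ v ^ j * v ^ (k - j) * (1 - v) ^ k := by
          gcongr
          linarith
      _ = (v * (1 - v)) ^ k := by rw [← pow_add, Nat.add_sub_of_le hjk, mul_pow]
  calc 1 - (majorityPoly k).eval v
      ≤ 2 ^ (2 * k) * (v * (1 - v)) ^ k := by
        rw [one_sub_eval_majorityPoly]
        exact sum_eval_bernsteinPolynomial_le (by grind) (by positivity) h_term
    _ = (4 * (v * (1 - v))) ^ k := by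
        rw [pow_mul, ← mul_pow]
        norm_num

end Majority

section Window

/-- A polynomial approximating on `[-1, 1]` the indicator function of `[-δ, δ]`: the squared
Dirichlet kernel of width proportional to `δ`, sharpened by a majority vote of `2 k` tosses. -/
noncomputable def windowPoly (δ : ℝ) (k : ℕ) : ℝ[X] :=
  (majorityPoly k).comp (dirichletPoly ⌊1 / (4 * δ)⌋₊ ^ 2)

lemma natDegree_windowPoly_le {δ : ℝ} (hδ : 0 < δ) (k : ℕ) :
    ((windowPoly δ k).natDegree : ℝ) ≤ 2 * k / δ := by
  set M := ⌊1 / (4 * δ)⌋₊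
  have h_kernel : (dirichletPoly M ^ 2).natDegree ≤ 2 * (2 * M) :=
    natDegree_pow_le_of_le 2 (natDegree_dirichletPoly_le M)
  have h_comp : (windowPoly δ k).natDegree ≤ 2 * k * (2 * (2 * M)) :=
    natDegree_comp_le.trans (Nat.mul_le_mul (natDegree_majorityPoly_le k) h_kernel)
  calc ((windowPoly δ k).natDegree : ℝ)
      ≤ 2 * k * (2 * (2 * M)) := by exact_mod_cast h_comp
    _ ≤ 2 * k * (2 * (2 * (1 / (4 * δ)))) := by
        gcongr
        exact Nat.floor_le (by positivity)
    _ = 2 * k / δ := by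
        field_simp
        ring

variable {δ x : ℝ} (k : ℕ)

lemma sq_eval_dirichletPoly_mem_Icc (M : ℕ) (hx : x ∈ Set.Icc (-1) 1) :
    (dirichletPoly M).eval x ^ 2 ∈ Set.Icc 0 1 :=
  ⟨sq_nonneg _, (sq_le_one_iff_abs_le_one _).mpr (abs_eval_dirichletPoly_le_one M hx)⟩

lemma eval_windowPoly_mem_Icc (δ : ℝ) (hx : x ∈ Set.Icc (-1) 1) :
    (windowPoly δ k).eval x ∈ Set.Icc 0 1 := by
  rw [windowPoly, eval_comp, eval_pow]
  have hv := sq_eval_dirichletPoly_mem_Icc ⌊1 / (4 * δ)⌋₊ hx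
  exact ⟨eval_majorityPoly_nonneg k hv, eval_majorityPoly_le_one k hv⟩

lemma one_sub_eval_windowPoly_le (hδ : 0 < δ) (hx : x ∈ Set.Icc (-1) 1) (hxδ : |x| ≤ δ) :
    1 - (windowPoly δ k).eval x ≤ (3 / 4) ^ k := by
  rw [windowPoly, eval_comp, eval_pow]
  set M := ⌊1 / (4 * δ)⌋₊
  set D := (dirichletPoly M).eval x
  have h_scale : |M * x| ≤ 1 / 4 := by
    rw [abs_mul, Nat.abs_cast]
    calc (M : ℝ) * |x| ≤ 1 / (4 * δ) * δ := by
          gcongr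
          exact Nat.floor_le (by positivity)
      _ = 1 / 4 := by field_simp
  have h_kernel : 7 / 8 ≤ D := by
    have h_lower := one_sub_le_eval_dirichletPoly M hx
    have h_sq : (M * x) ^ 2 ≤ (1 / 4) ^ 2 := sq_le_sq' (abs_le.mp h_scale).1 (abs_le.mp h_scale).2
    linarith
  have hv : 3 / 4 ≤ D ^ 2 := by nlinarith
  have hv₁ : D ^ 2 ≤ 1 := (sq_eval_dirichletPoly_mem_Icc M hx).2
  refine (one_sub_eval_majorityPoly_le_pow k ⟨by linarith, hv₁⟩).trans ?_
  have : 0 ≤ 1 - D ^ 2 := by linarith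
  gcongr
  nlinarith

lemma eval_windowPoly_mul_pow_le (hδ : 0 < δ) (hx : x ∈ Set.Icc (-1) 1) :
    (windowPoly δ k).eval x * ((x / δ) ^ 2) ^ k ≤ 64 ^ k := by
  rw [windowPoly, eval_comp, eval_pow]
  set M := ⌊1 / (4 * δ)⌋₊
  set D := (dirichletPoly M).eval x
  have h_width : 1 / δ ≤ 4 * (2 * M + 1) := by
    have h_floor : 1 / (4 * δ) < M + 1 := Nat.lt_floor_add_one _
    have h_split : 1 / δ = 4 * (1 / (4 * δ)) := by field_simp
    have : (0 : ℝ) ≤ M := by positivity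
    linarith
  have h_decay : |D * (x / δ)| ≤ 4 :=
    calc |D * (x / δ)| = |D * x| * (1 / δ) := by
          rw [← mul_div_assoc, abs_div, abs_of_pos hδ, mul_one_div]
      _ ≤ |D * x| * (4 * (2 * M + 1)) := by gcongr
      _ = 4 * |(2 * M + 1) * x * D| := by
          rw [mul_assoc (2 * M + 1 : ℝ), abs_mul (2 * M + 1 : ℝ),
            abs_of_pos (by positivity : (0 : ℝ) < 2 * M + 1), mul_comm x]
          ring
      _ ≤ 4 * 1 := by
          gcongr
          exact abs_mul_eval_dirichletPoly_le_one M hx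
      _ = 4 := mul_one 4
  have h_sq : (D * (x / δ)) ^ 2 ≤ 4 ^ 2 := sq_le_sq' (abs_le.mp h_decay).1 (abs_le.mp h_decay).2
  calc (majorityPoly k).eval (D ^ 2) * ((x / δ) ^ 2) ^ k
      ≤ (4 * D ^ 2) ^ k * ((x / δ) ^ 2) ^ k := by
        gcongr
        exact eval_majorityPoly_le_pow k (sq_eval_dirichletPoly_mem_Icc M hx)
    _ = (4 * (D * (x / δ)) ^ 2) ^ k := by
        rw [← mul_pow]
        ring
    _ ≤ 64 ^ k := by
        gcongr
        linarith

end Window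

section Taylor

/-- The Taylor polynomial of `exp` at `0` with its first `n` terms. -/
noncomputable def expTaylor (n : ℕ) : ℂ[X] :=
  ∑ m ∈ Finset.range n, C (m.factorial : ℂ)⁻¹ * X ^ m

lemma natDegree_expTaylor_le (n : ℕ) : (expTaylor n).natDegree ≤ n :=
  natDegree_sum_le_of_forall_le _ _ fun _ hm =>
    (natDegree_C_mul_X_pow_le _ _).trans (Finset.mem_range.mp hm).le

lemma eval_expTaylor (n : ℕ) (z : ℂ) :
    (expTaylor n).eval z = ∑ m ∈ Finset.range n, z ^ m / m.factorial := by
  simp [expTaylor, eval_finsetSum, div_eq_inv_mul]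

lemma norm_eval_expTaylor_sub_exp_le {n : ℕ} {z : ℂ} (hn : 2 * ‖z‖ ≤ n) :
    ‖(expTaylor n).eval z - Complex.exp z‖ ≤ 2 * Real.exp (Real.exp 1 * ‖z‖ - n) := by
  have h_ratio : ‖z‖ / n.succ ≤ 1 / 2 := by
    rw [div_le_iff₀ (by positivity)]
    push_cast
    linarith
  have h_term : ‖z‖ ^ n / n.factorial ≤ Real.exp (Real.exp 1 * ‖z‖ - n) := by
    rw [Real.exp_sub, le_div_iff₀ (Real.exp_pos _), ← Real.exp_one_pow]
    calc ‖z‖ ^ n / n.factorial * Real.exp 1 ^ n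
        = (Real.exp 1 * ‖z‖) ^ n / n.factorial := by
          rw [mul_pow]
          ring
      _ ≤ Real.exp (Real.exp 1 * ‖z‖) := Real.pow_div_factorial_le_exp _ (by positivity) n
  rw [norm_sub_rev, eval_expTaylor]
  linarith [Complex.exp_bound' h_ratio]

lemma norm_eval_expTaylor_smul_le {s : ℝ} (hs : 1 ≤ s) (n : ℕ) (z : ℂ) :
    ‖(expTaylor n).eval (s • z)‖ ≤ s ^ n * Real.exp ‖z‖ := by
  rw [eval_expTaylor]
  calc ‖∑ m ∈ Finset.range n, (s • z) ^ m / m.factorial‖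
      ≤ ∑ m ∈ Finset.range n, ‖(s • z) ^ m / m.factorial‖ := norm_sum_le _ _
    _ = ∑ m ∈ Finset.range n, s ^ m * (‖z‖ ^ m / m.factorial) := by
        refine Finset.sum_congr rfl fun m _ => ?_
        rw [norm_div, norm_pow, norm_smul, Real.norm_of_nonneg (by linarith), mul_pow,
          Complex.norm_natCast, mul_div_assoc]
    _ ≤ ∑ m ∈ Finset.range n, s ^ n * (‖z‖ ^ m / m.factorial) := by
        gcongr with m hm
        exact (Finset.mem_range.mp hm).le
    _ ≤ s ^ n * Real.exp ‖z‖ := by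
        rw [← Finset.mul_sum]
        gcongr
        exact Real.sum_le_exp_of_nonneg (norm_nonneg z) n

lemma norm_smul_eval_expTaylor_smul_le_one {w s : ℝ} {n : ℕ} {z : ℂ} (hw : 0 ≤ w)
    (hs : 2 ^ 14 ≤ s) (hws : w * s ^ (2 * n) ≤ 64 ^ (2 * n)) (hz : ‖z‖ ≤ n) :
    ‖w • (expTaylor n).eval (s • z)‖ ≤ 1 := by
  have hs_pos : 0 < s ^ n := by positivity
  have h_exp : Real.exp ‖z‖ ≤ 4 ^ n := by
    calc Real.exp ‖z‖ ≤ Real.exp n := Real.exp_le_exp.mpr hz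
      _ = Real.exp 1 ^ n := (Real.exp_one_pow n).symm
      _ ≤ 4 ^ n := by
        gcongr
        linarith [Real.exp_one_lt_three]
  refine le_of_mul_le_mul_right ?_ hs_pos
  rw [norm_smul, Real.norm_of_nonneg hw]
  calc w * ‖(expTaylor n).eval (s • z)‖ * s ^ n
      ≤ w * (s ^ n * Real.exp ‖z‖) * s ^ n := by
        gcongr
        exact norm_eval_expTaylor_smul_le (by linarith) n z
    _ = w * s ^ (2 * n) * Real.exp ‖z‖ := by ring
    _ ≤ 64 ^ (2 * n) * 4 ^ n := by gcongr
    _ = (2 ^ 14) ^ n := by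
        rw [pow_mul, ← mul_pow]
        norm_num
    _ ≤ 1 * s ^ n := by
        rw [one_mul]
        gcongr

end Taylor

section Exponential

open Complex (I)

lemma norm_exp_smul_I (y : ℝ) : ‖Complex.exp (y • I)‖ = 1 := by
  rw [Complex.real_smul, Complex.norm_exp_ofReal_mul_I]

/-- The Taylor polynomial of `exp (i τ (x / δ) ^ 2)` with `n` terms in `(x / δ) ^ 2`, multiplied by
the window of width `δ` and majority parameter `2 n`, and normalised by `(1 + η)⁻¹`. -/
noncomputable def windowedExpPoly (τ δ η : ℝ) (n : ℕ) : ℂ[X] :=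
  C ((1 + η)⁻¹ : ℂ) * ((windowPoly δ (2 * n)).map (algebraMap ℝ ℂ) *
    (expTaylor n).comp (C (τ * I / δ ^ 2) * X ^ 2))

lemma eval_windowedExpPoly (τ δ η : ℝ) (n : ℕ) (x : ℝ) :
    (windowedExpPoly τ δ η n).eval (x : ℂ) = (1 + η)⁻¹ •
      (windowPoly δ (2 * n)).eval x • (expTaylor n).eval ((x / δ) ^ 2 • τ • I) := by
  have h_window : ((windowPoly δ (2 * n)).map (algebraMap ℝ ℂ)).eval (x : ℂ) =
      ((windowPoly δ (2 * n)).eval x : ℝ) := by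
    rw [eval_map_algebraMap]
    exact aeval_algebraMap_apply_eq_algebraMap_eval x _
  have h_arg : τ * I / δ ^ 2 * (x : ℂ) ^ 2 = (x / δ) ^ 2 • τ • I := by
    simp only [Complex.real_smul]
    push_cast
    ring
  rw [windowedExpPoly, eval_C_mul, eval_mul, h_window, eval_comp, eval_C_mul, eval_X_pow, h_arg,
    Complex.real_smul (x := (1 + η)⁻¹), Complex.real_smul (x := (windowPoly δ (2 * n)).eval x)]
  push_cast
  rfl

lemma natDegree_windowedExpPoly_le (τ η : ℝ) {δ : ℝ} (hδ : 0 < δ) (hδ₁ : δ ≤ 1) (n : ℕ) :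
    ((windowedExpPoly τ δ η n).natDegree : ℝ) ≤ 6 * n / δ := by
  have h_taylor : ((expTaylor n).comp (C (τ * I / δ ^ 2) * X ^ 2)).natDegree ≤ n * 2 :=
    natDegree_comp_le.trans
      (Nat.mul_le_mul (natDegree_expTaylor_le n) (natDegree_C_mul_X_pow_le _ _))
  have h_mul : (windowedExpPoly τ δ η n).natDegree ≤ (windowPoly δ (2 * n)).natDegree + n * 2 :=
    (natDegree_C_mul_le _ _).trans
      (natDegree_mul_le.trans (Nat.add_le_add natDegree_map_le h_taylor))
  have h_window : ((windowPoly δ (2 * n)).natDegree : ℝ) ≤ 2 * (2 * n : ℕ) / δ :=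
    natDegree_windowPoly_le hδ (2 * n)
  calc ((windowedExpPoly τ δ η n).natDegree : ℝ)
      ≤ (windowPoly δ (2 * n)).natDegree + n * 2 := by exact_mod_cast h_mul
    _ ≤ 2 * (2 * n : ℕ) / δ + n * 2 / δ := by
        gcongr
        exact le_div_self (by positivity) hδ hδ₁
    _ = 6 * n / δ := by
        push_cast
        ring

variable {τ δ η x : ℝ} {n : ℕ}

lemma norm_eval_expTaylor_sub_exp_smul_I_le (hτ : 0 ≤ τ) (hη : 0 < η) (hη₁ : η ≤ 1)
    (hn : 2 ^ 16 * (τ + Real.log (2 / η)) ≤ n) {s : ℝ} (hs₀ : 0 ≤ s) (hs : s ≤ 2 ^ 14) :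
    ‖(expTaylor n).eval (s • τ • I) - Complex.exp (s • τ • I)‖ ≤ η := by
  have h_log : 0 ≤ Real.log (2 / η) := Real.log_nonneg ((one_le_div hη).mpr (by linarith))
  have h_norm : ‖s • τ • I‖ = s * τ := by
    rw [norm_smul, norm_smul, Complex.norm_I, Real.norm_of_nonneg hs₀, Real.norm_of_nonneg hτ,
      mul_one]
  have h_arg : s * τ ≤ 2 ^ 14 * τ := by gcongr
  have h_exponent : Real.exp 1 * ‖s • τ • I‖ - n ≤ -Real.log (2 / η) := by
    have h_e : Real.exp 1 * (s * τ) ≤ 3 * (s * τ) := by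
      gcongr
      exact Real.exp_one_lt_three.le
    rw [h_norm]
    linarith
  calc ‖(expTaylor n).eval (s • τ • I) - Complex.exp (s • τ • I)‖
      ≤ 2 * Real.exp (Real.exp 1 * ‖s • τ • I‖ - n) :=
        norm_eval_expTaylor_sub_exp_le (by rw [h_norm]; linarith)
    _ ≤ 2 * Real.exp (-Real.log (2 / η)) := by gcongr
    _ = η := by
        rw [Real.exp_neg, Real.exp_log (by positivity)]
        field_simp

lemma norm_eval_windowedExpPoly_le_one (hτ : 0 ≤ τ) (hδ : 0 < δ) (hη : 0 < η) (hη₁ : η ≤ 1)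
    (hn : 2 ^ 16 * (τ + Real.log (2 / η)) ≤ n) (hx : x ∈ Set.Icc (-1) 1) :
    ‖(windowedExpPoly τ δ η n).eval (x : ℂ)‖ ≤ 1 := by
  have h_log : 0 ≤ Real.log (2 / η) := Real.log_nonneg ((one_le_div hη).mpr (by linarith))
  obtain ⟨hw₀, hw₁⟩ := eval_windowPoly_mem_Icc (2 * n) δ hx
  rw [eval_windowedExpPoly, norm_smul, norm_inv, Real.norm_of_nonneg (by positivity),
    inv_mul_le_one₀ (by positivity)]
  rcases le_total ((x / δ) ^ 2) (2 ^ 14) with hs | hs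
  · have h_taylor := norm_eval_expTaylor_sub_exp_smul_I_le hτ hη hη₁ hn (sq_nonneg (x / δ)) hs
    have h_exp : ‖Complex.exp ((x / δ) ^ 2 • τ • I)‖ = 1 := by
      rw [smul_smul, norm_exp_smul_I]
    rw [norm_smul, Real.norm_of_nonneg hw₀]
    refine (mul_le_of_le_one_left (norm_nonneg _) hw₁).trans ?_
    linarith [norm_le_norm_add_norm_sub' ((expTaylor n).eval ((x / δ) ^ 2 • τ • I))
      (Complex.exp ((x / δ) ^ 2 • τ • I))]
  · have h_norm : ‖τ • I‖ ≤ n := by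
      rw [norm_smul, Complex.norm_I, Real.norm_of_nonneg hτ]
      linarith
    have h_outer := norm_smul_eval_expTaylor_smul_le_one hw₀ hs
      (eval_windowPoly_mul_pow_le (2 * n) hδ hx) h_norm
    linarith

lemma norm_eval_windowedExpPoly_sub_exp_le (hτ : 0 ≤ τ) (hδ : 0 < δ) (hη : 0 < η) (hη₁ : η ≤ 1)
    (hn : 2 ^ 16 * (τ + Real.log (2 / η)) ≤ n) (hx : x ∈ Set.Icc (-1) 1) (hxδ : |x| ≤ δ) :
    ‖(windowedExpPoly τ δ η n).eval (x : ℂ) - Complex.exp (((x / δ) ^ 2 * τ) • I)‖ ≤ 3 * η := by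
  obtain ⟨hw₀, hw₁⟩ := eval_windowPoly_mem_Icc (2 * n) δ hx
  have hs : (x / δ) ^ 2 ≤ 1 := by
    rw [sq_le_one_iff_abs_le_one, abs_div, abs_of_pos hδ]
    exact (div_le_one hδ).mpr hxδ
  have h_window : 1 - (windowPoly δ (2 * n)).eval x ≤ η :=
    calc 1 - (windowPoly δ (2 * n)).eval x
        ≤ (3 / 4) ^ (2 * n) := one_sub_eval_windowPoly_le (2 * n) hδ hx hxδ
      _ ≤ Real.exp (-(1 / 4)) ^ (2 * n) := by
          gcongr
          linarith [Real.one_sub_le_exp_neg (1 / 4)]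
      _ = Real.exp (-(n / 2)) := by
          rw [← Real.exp_nat_mul]
          push_cast
          ring_nf
      _ ≤ Real.exp (-Real.log (2 / η)) := by
          have : 0 ≤ Real.log (2 / η) := Real.log_nonneg ((one_le_div hη).mpr (by linarith))
          exact Real.exp_le_exp.mpr (by linarith)
      _ = η / 2 := by rw [Real.exp_neg, Real.exp_log (by positivity), inv_div]
      _ ≤ η := half_le_self hη.le
  rw [eval_windowedExpPoly, ← smul_smul]
  exact norm_inv_smul_smul_sub_le hw₀ hw₁ h_window
    (by rw [smul_smul, norm_exp_smul_I])
    (norm_eval_expTaylor_sub_exp_smul_I_le hτ hη hη₁ hn (sq_nonneg _) (by linarith))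

theorem exists_poly_approx_exp_quadratic {ε : ℝ} (hτ : 0 ≤ τ) (hδ : 0 < δ) (hδ₁ : δ ≤ 1)
    (hε : 0 < ε) (hε₁ : ε ≤ 1) :
    ∃ P : ℂ[X], (P.natDegree : ℝ) ≤ 2 ^ 21 * ((τ + 1 + Real.log (1 / ε)) / δ) ∧
      (∀ x ∈ Set.Icc (-1 : ℝ) 1, ‖P.eval (x : ℂ)‖ ≤ 1) ∧
      ∀ x : ℝ, |x| ≤ δ → ‖P.eval (x : ℂ) - Complex.exp (((x / δ) ^ 2 * τ) • I)‖ ≤ 2 * ε := by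
  have hη : 0 < ε / 2 := by positivity
  have hη₁ : ε / 2 ≤ 1 := by linarith
  set n := ⌈2 ^ 16 * (τ + Real.log (2 / (ε / 2)))⌉₊
  have hn : 2 ^ 16 * (τ + Real.log (2 / (ε / 2))) ≤ n := Nat.le_ceil _
  have h_log : 0 ≤ Real.log (1 / ε) := Real.log_nonneg (one_le_one_div hε hε₁)
  have h_log_η : Real.log (2 / (ε / 2)) = Real.log 4 + Real.log (1 / ε) := by
    rw [← Real.log_mul (by norm_num) (by positivity)]
    congr 1
    field_simp
    norm_num
  have h_log_four : Real.log 4 ∈ Set.Icc 0 3 :=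
    ⟨Real.log_nonneg (by norm_num),
      (Real.log_le_sub_one_of_pos (by norm_num)).trans_eq (by norm_num)⟩
  have h_ceil : (n : ℝ) ≤ 2 ^ 18 * (τ + 1 + Real.log (1 / ε)) := by
    have h_lt : n < 2 ^ 16 * (τ + Real.log (2 / (ε / 2))) + 1 :=
      Nat.ceil_lt_add_one (by rw [h_log_η]; linarith [h_log_four.1])
    linarith [h_log_four.2]
  refine ⟨windowedExpPoly τ δ (ε / 2) n, ?_, fun x hx => ?_, fun x hx => ?_⟩
  · calc ((windowedExpPoly τ δ (ε / 2) n).natDegree : ℝ)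
        ≤ 6 * n / δ := natDegree_windowedExpPoly_le τ (ε / 2) hδ hδ₁ n
      _ ≤ 8 * (2 ^ 18 * (τ + 1 + Real.log (1 / ε))) / δ := by gcongr; norm_num
      _ = 2 ^ 21 * ((τ + 1 + Real.log (1 / ε)) / δ) := by ring
  · exact norm_eval_windowedExpPoly_le_one hτ hδ hη hη₁ hn hx
  · have hx' : x ∈ Set.Icc (-1) 1 := abs_le.mp (hx.trans hδ₁)
    linarith [norm_eval_windowedExpPoly_sub_exp_le hτ hδ hη hη₁ hn hx' hx]

lemma re_exp_smul_I (y : ℝ) : (Complex.exp (y • I)).re = Real.cos y := by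
  rw [Complex.real_smul, Complex.exp_ofReal_mul_I_re]

lemma im_exp_smul_I (y : ℝ) : (Complex.exp (y • I)).im = Real.sin y := by
  rw [Complex.real_smul, Complex.exp_ofReal_mul_I_im]

lemma div_sqrt_div_eq (t ℓ : ℝ) {lam Γ : ℝ} (hlam : 0 < lam) (hΓ : 0 < Γ) :
    (t * Γ + 1 + ℓ) / Real.sqrt (Γ / lam) =
      t * Real.sqrt (lam * Γ) + Real.sqrt (lam / Γ) * (1 + ℓ) := by
  have : 0 < Real.sqrt Γ := Real.sqrt_pos.mpr hΓ
  have h_sq : Real.sqrt Γ ^ 2 = Γ := Real.sq_sqrt hΓ.le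
  rw [Real.sqrt_div hΓ.le, Real.sqrt_div hlam.le, Real.sqrt_mul hlam.le]
  field_simp
  rw [h_sq]
  ring

theorem exists_poly_approx_linearMap_exp_quadratic (L : ℂ →ₗ[ℝ] ℂ) (hL : ∀ z, ‖L z‖ ≤ ‖z‖)
    {t lam Γ ε : ℝ} (ht : 0 ≤ t) (hlam : 0 < lam) (hΓ : 0 < Γ) (hΓlam : Γ ≤ lam) (hε : 0 < ε)
    (hε₁ : ε ≤ 1) :
    ∃ P : ℂ[X],
      (P.natDegree : ℝ) ≤
        2 ^ 21 * (t * Real.sqrt (lam * Γ) + Real.sqrt (lam / Γ) * (1 + Real.log (1 / ε))) ∧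
      (∀ x ∈ Set.Icc (-1 : ℝ) 1, ‖P.eval (x : ℂ)‖ ≤ 1) ∧
      ∀ x : ℝ, |x| ≤ Real.sqrt (Γ / lam) →
        ‖P.eval (x : ℂ) - L (Complex.exp ((t * lam * x ^ 2) • I))‖ ≤ 2 * ε := by
  have hδ : 0 < Real.sqrt (Γ / lam) := Real.sqrt_pos.mpr (by positivity)
  have hδ₁ : Real.sqrt (Γ / lam) ≤ 1 := Real.sqrt_le_one.mpr ((div_le_one hlam).mpr hΓlam)
  obtain ⟨Q, hQ_degree, hQ_bound, hQ_approx⟩ :=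
    exists_poly_approx_exp_quadratic (τ := t * Γ) (by positivity) hδ hδ₁ hε hε₁
  obtain ⟨P, hP_degree, hP_eval⟩ := exists_eval_algebraMap_eq_linearMap L Q
  have hP (x : ℝ) : P.eval (x : ℂ) = L (Q.eval (x : ℂ)) := hP_eval x
  refine ⟨P, ?_, fun x hx => ?_, fun x hx => ?_⟩
  · rw [← div_sqrt_div_eq t _ hlam hΓ]
    exact (Nat.cast_le.mpr hP_degree).trans hQ_degree
  · rw [hP]
    exact (hL _).trans (hQ_bound x hx)
  · have h_arg : (x / Real.sqrt (Γ / lam)) ^ 2 * (t * Γ) = t * lam * x ^ 2 := by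
      rw [div_pow, Real.sq_sqrt (by positivity)]
      field_simp
    rw [hP, ← map_sub, ← h_arg]
    exact (hL _).trans (hQ_approx x hx)

end Exponential

/-- There is a universal constant `C > 0` such that for all `t > 0`,
`0 < Γ ≤ λ`, and `ε ∈ (0,1)`, there are complex polynomials `P_cos`, `P_sin` of degree at
most `C·(t√(λΓ) + √(λ/Γ)(1 + log(1/ε)))`, bounded by 1 on `[−1,1]`, that `2ε`-approximate
`cos(tλx²)` and `sin(tλx²)` for all `|x| ≤ √(Γ/λ)`. -/
theorem poly_approx_cos_sin_quadratic :
    ∃ C : ℝ, 0 < C ∧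
      ∀ (t lam Γ ε : ℝ), 0 < t → 0 < lam → 0 < Γ → Γ ≤ lam → 0 < ε → ε < 1 →
        ∃ Pc Ps : Polynomial ℂ,
          (Pc.natDegree : ℝ) ≤
            C * (t * Real.sqrt (lam * Γ) + Real.sqrt (lam / Γ) * (1 + Real.log (1 / ε))) ∧
          (Ps.natDegree : ℝ) ≤
            C * (t * Real.sqrt (lam * Γ) + Real.sqrt (lam / Γ) * (1 + Real.log (1 / ε))) ∧
          (∀ x ∈ Set.Icc (-1 : ℝ) 1, ‖Pc.eval (x : ℂ)‖ ≤ 1) ∧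
          (∀ x ∈ Set.Icc (-1 : ℝ) 1, ‖Ps.eval (x : ℂ)‖ ≤ 1) ∧
          (∀ x : ℝ, |x| ≤ Real.sqrt (Γ / lam) →
            ‖Pc.eval (x : ℂ) - ((Real.cos (t * lam * x ^ 2) : ℝ) : ℂ)‖ ≤ 2 * ε) ∧
          (∀ x : ℝ, |x| ≤ Real.sqrt (Γ / lam) →
            ‖Ps.eval (x : ℂ) - ((Real.sin (t * lam * x ^ 2) : ℝ) : ℂ)‖ ≤ 2 * ε) := by
  refine ⟨2 ^ 21, by norm_num, fun t lam Γ ε ht hlam hΓ hΓlam hε hε₁ => ?_⟩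
  let ofRealRe : ℂ →ₗ[ℝ] ℂ := Complex.ofRealCLM.toLinearMap ∘ₗ Complex.reLm
  let ofRealIm : ℂ →ₗ[ℝ] ℂ := Complex.ofRealCLM.toLinearMap ∘ₗ Complex.imLm
  have h_re (z : ℂ) : ‖ofRealRe z‖ ≤ ‖z‖ :=
    (Complex.norm_real _).trans_le (Complex.abs_re_le_norm z)
  have h_im (z : ℂ) : ‖ofRealIm z‖ ≤ ‖z‖ :=
    (Complex.norm_real _).trans_le (Complex.abs_im_le_norm z)
  obtain ⟨Pc, hc_degree, hc_bound, hc_approx⟩ := exists_poly_approx_linearMap_exp_quadratic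
    ofRealRe h_re ht.le hlam hΓ hΓlam hε hε₁.le
  obtain ⟨Ps, hs_degree, hs_bound, hs_approx⟩ := exists_poly_approx_linearMap_exp_quadratic
    ofRealIm h_im ht.le hlam hΓ hΓlam hε hε₁.le
  refine ⟨Pc, Ps, hc_degree, hs_degree, hc_bound, hs_bound, fun x hx => ?_, fun x hx => ?_⟩
  · rw [← re_exp_smul_I]
    exact hc_approx x hx
  · rw [← im_exp_smul_I]
    exact hs_approx x hx
end

section
/- Let t > 0, ε > 0, and Δ ∈ (0, 1] satisfy 1 ≥ √ε, √ε ≥ tΔ, and tΔ ≥ 8ε, and set θ_M := arcsin(√Δ). Let K be a nonnegative integer and let P(θ) = Σ_{k=−K}^{K} a_k e^{ikθ} with a_k ∈ ℂ be a trigonometric polynomial of degree at most K such that |P(θ)| ≤ 1 for all θ ∈ ℝ and |e^{−it·sin²θ} − P(θ)| ≤ ε for all θ ∈ [−θ_M, θ_M]. Then K ≥ (1/π)·√(2t). -/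
/-!
Sampling the Fourier series of a periodised parabola at the frequencies of `P` gives an M. Riesz
interpolation formula for `P''`, whose weights sum to `σ²` in absolute value; hence `‖P''‖ ≤ σ²`
whenever `‖P‖ ≤ 1` and all frequencies lie in `[-σ, σ]` (Bernstein). Consequently the second
difference `P(θ) + P(-θ) - 2 P(0)` is at most `σ² θ²`. As `e^{-it sin² θ}` is even, its increment
from `0` to `θ` is within `2ε` of half that second difference, while it has size about
`t sin² θ ≥ 4 t θ² / π²`.
-/

section SecondDifference

variable {E : Type*} [NormedAddCommGroup E] [NormedSpace ℝ E]

theorem norm_second_difference_le {f : ℝ → E} {C : ℝ} (hf : Differentiable ℝ f)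
    (hf' : Differentiable ℝ (deriv f)) (hC : ∀ x, ‖deriv (deriv f) x‖ ≤ C) (x h : ℝ) :
    ‖f (x + h) + f (x - h) - (2 : ℝ) • f x‖ ≤ C * h ^ 2 := by
  let g : ℝ → E := fun u => f (x + u * h) + f (x - u * h) - (2 : ℝ) • f x
  have hasDerivAt_g (u : ℝ) :
      HasDerivAt g (h • (deriv f (x + u * h) - deriv f (x - u * h))) u := by
    have hplus := (hf _).hasDerivAt.scomp u (((hasDerivAt_id' u).mul_const h).const_add x)
    have hminus := (hf _).hasDerivAt.scomp u (((hasDerivAt_id' u).mul_const h).const_sub x)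
    convert! (hplus.add hminus).sub_const ((2 : ℝ) • f x) using 1
    module
  have norm_deriv_g_le (u : ℝ) (hu : 0 ≤ u) :
      ‖h • (deriv f (x + u * h) - deriv f (x - u * h))‖ ≤ C * h ^ 2 * (2 * u) := by
    have hlip : ‖deriv f (x + u * h) - deriv f (x - u * h)‖ ≤
        C * ‖x + u * h - (x - u * h)‖ :=
      convex_univ.norm_image_sub_le_of_norm_deriv_le (fun y _ => hf' y) (fun y _ => hC y)
        (Set.mem_univ _) (Set.mem_univ _)
    calc ‖h • (deriv f (x + u * h) - deriv f (x - u * h))‖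
        ≤ |h| * (C * ‖x + u * h - (x - u * h)‖) := by
          rw [norm_smul, Real.norm_eq_abs]; gcongr
      _ = |h| * (C * (2 * u * |h|)) := by
          rw [show x + u * h - (x - u * h) = 2 * u * h by ring, Real.norm_eq_abs, abs_mul,
            abs_of_nonneg (by positivity : 0 ≤ 2 * u)]
      _ = C * h ^ 2 * (2 * u) := by rw [← sq_abs h]; ring
  have hbound := image_norm_le_of_norm_deriv_right_le_deriv_boundary (f := g) (a := 0) (b := 1)
    (B := fun u => C * h ^ 2 * u ^ 2) (fun u _ => (hasDerivAt_g u).continuousAt.continuousWithinAt)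
    (fun u _ => (hasDerivAt_g u).hasDerivWithinAt) (by simp [g, two_smul])
    (fun u => by simpa using (hasDerivAt_pow 2 u).const_mul (C * h ^ 2))
    (fun u hu => norm_deriv_g_le u hu.1) (Set.right_mem_Icc.mpr zero_le_one)
  simpa [g] using hbound

theorem norm_sub_le_of_even_of_approx {f g : ℝ → E} {ε θ : ℝ} (hf : f (-θ) = f θ)
    (h0 : ‖f 0 - g 0‖ ≤ ε) (hpos : ‖f θ - g θ‖ ≤ ε) (hneg : ‖f (-θ) - g (-θ)‖ ≤ ε) :
    ‖f θ - f 0‖ ≤ 2 * ε + ‖g θ + g (-θ) - (2 : ℝ) • g 0‖ / 2 := by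
  have hsplit : (2 : ℝ) • (f θ - f 0) = (f θ - g θ) + (f (-θ) - g (-θ)) +
      (g θ + g (-θ) - (2 : ℝ) • g 0) - (2 : ℝ) • (f 0 - g 0) := by
    rw [hf]; module
  have hnorm := congrArg norm hsplit
  rw [norm_smul, Real.norm_two] at hnorm
  have htriangle := norm_sub_le ((f θ - g θ) + (f (-θ) - g (-θ)) +
    (g θ + g (-θ) - (2 : ℝ) • g 0)) ((2 : ℝ) • (f 0 - g 0))
  rw [norm_smul, Real.norm_two] at htriangle
  have htriangle₃ := norm_add₃_le (a := f θ - g θ) (b := f (-θ) - g (-θ))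
    (c := g θ + g (-θ) - (2 : ℝ) • g 0)
  linarith

end SecondDifference

section ExponentialSum

open scoped Real

variable {ι E : Type*} [NormedAddCommGroup E] [NormedSpace ℂ E]

/-- The exponential sum `θ ↦ ∑ j ∈ s, e^{i (ω j) θ} • a j` with real frequencies `ω j` and vector
coefficients `a j`. Trigonometric polynomials of degree at most `K` are the case of integer
frequencies in `[-K, K]`. -/
noncomputable def exponentialSum (s : Finset ι) (ω : ι → ℝ) (a : ι → E) (θ : ℝ) : E :=
  ∑ j ∈ s, Complex.exp (Complex.I * ω j * θ) • a j

theorem hasDerivAt_exponentialSum (s : Finset ι) (ω : ι → ℝ) (a : ι → E) (θ : ℝ) :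
    HasDerivAt (exponentialSum s ω a)
      (exponentialSum s ω (fun j => (Complex.I * ω j) • a j) θ) θ := by
  refine HasDerivAt.fun_sum fun j _ => ?_
  have hexp : HasDerivAt (fun x : ℝ => Complex.exp (Complex.I * ω j * x))
      (Complex.exp (Complex.I * ω j * θ) * (Complex.I * ω j)) θ := by
    simpa using (((hasDerivAt_id (θ : ℂ)).const_mul (Complex.I * ω j)).cexp).comp_ofReal
  simpa only [mul_smul] using hexp.smul_const (a j)

theorem differentiable_exponentialSum (s : Finset ι) (ω : ι → ℝ) (a : ι → E) :
    Differentiable ℝ (exponentialSum s ω a) :=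
  fun θ => (hasDerivAt_exponentialSum s ω a θ).differentiableAt

theorem deriv_exponentialSum (s : Finset ι) (ω : ι → ℝ) (a : ι → E) :
    deriv (exponentialSum s ω a) = exponentialSum s ω (fun j => (Complex.I * ω j) • a j) :=
  funext fun θ => (hasDerivAt_exponentialSum s ω a θ).deriv

theorem exponentialSum_add_exponentialSum_sub (s : Finset ι) (ω : ι → ℝ) (a : ι → E) (θ h : ℝ) :
    exponentialSum s ω a (θ + h) + exponentialSum s ω a (θ - h) =
      ∑ j ∈ s, (2 * Real.cos (ω j * h)) • Complex.exp (Complex.I * ω j * θ) • a j := by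
  simp only [exponentialSum, ← Finset.sum_add_distrib, ← add_smul]
  refine Finset.sum_congr rfl fun j _ => ?_
  rw [← Complex.coe_smul, smul_smul]
  push_cast
  rw [Complex.two_cos, add_mul, ← Complex.exp_add, ← Complex.exp_add]
  ring_nf

theorem hasSum_parabola {σ x : ℝ} (hx : |x| ≤ σ) :
    HasSum (fun n : ℕ => -(2 * σ ^ 2 / π ^ 2) * ((-1) ^ n / (n : ℝ) ^ 2) *
      (2 * Real.cos (x * (n * π / σ)))) (σ ^ 2 / 3 - x ^ 2) := by
  -- Fourier series of the Bernoulli polynomial `B₂` at `1/2 + x/(2σ)`; the term `n = 0` is `0`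
  -- since `1/0 = 0`.
  obtain ⟨hlower, hupper⟩ := abs_le.mp hx
  obtain rfl | hσ := ((abs_nonneg x).trans hx).eq_or_lt
  · simp [show x = 0 by linarith]
  have hmem : 1 / 2 + x / (2 * σ) ∈ Set.Icc (0 : ℝ) 1 := by
    rw [show 1 / 2 + x / (2 * σ) = (σ + x) / (2 * σ) by field_simp]
    exact ⟨div_nonneg (by linarith) (by linarith), (div_le_one (by linarith)).mpr (by linarith)⟩
  have hbernoulli (y : ℝ) : (Polynomial.map (algebraMap ℚ ℝ)
      (Polynomial.bernoulli (2 * 1))).eval y = 6⁻¹ + -y + y ^ 2 := by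
    simp [Polynomial.bernoulli_def, Finset.sum_range_succ, bernoulli_one, bernoulli_two]
  have hcos (n : ℕ) : Real.cos (2 * π * n * (1 / 2 + x / (2 * σ))) =
      (-1) ^ n * Real.cos (x * (n * π / σ)) := by
    rw [show 2 * π * n * (1 / 2 + x / (2 * σ)) = x * (n * π / σ) + n * π by field_simp; ring,
      Real.cos_add_nat_mul_pi]
  convert! (hasSum_one_div_nat_pow_mul_cos one_ne_zero hmem).mul_left (-(4 * σ ^ 2 / π ^ 2))
    using 1
  · funext n
    rw [hcos]
    ring
  · simp only [hbernoulli, mul_one, Nat.factorial_two, Nat.cast_ofNat]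
    field_simp
    ring

theorem hasSum_deriv_deriv_exponentialSum {s : Finset ι} {ω : ι → ℝ} {σ : ℝ}
    (hω : ∀ j ∈ s, |ω j| ≤ σ) (a : ι → E) (θ : ℝ) :
    HasSum (fun n : ℕ => (-(2 * σ ^ 2 / π ^ 2) * ((-1) ^ n / (n : ℝ) ^ 2)) •
      (exponentialSum s ω a (θ + n * π / σ) + exponentialSum s ω a (θ - n * π / σ)))
      (deriv (deriv (exponentialSum s ω a)) θ + (σ ^ 2 / 3) • exponentialSum s ω a θ) := by
  have hvalue : deriv (deriv (exponentialSum s ω a)) θ + (σ ^ 2 / 3) • exponentialSum s ω a θ =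
      ∑ j ∈ s, (σ ^ 2 / 3 - ω j ^ 2) • Complex.exp (Complex.I * ω j * θ) • a j := by
    simp only [deriv_exponentialSum, exponentialSum, Finset.smul_sum, ← Finset.sum_add_distrib]
    refine Finset.sum_congr rfl fun j _ => ?_
    simp only [← Complex.coe_smul, smul_smul, ← add_smul]
    push_cast
    congr 1
    linear_combination Complex.exp (Complex.I * ω j * θ) * (ω j : ℂ) ^ 2 * Complex.I_sq
  simp only [hvalue, exponentialSum_add_exponentialSum_sub, Finset.smul_sum, smul_smul]
  refine hasSum_sum fun j hj => ?_
  simpa only [smul_smul] using (hasSum_parabola (hω j hj)).smul_const _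

theorem norm_deriv_deriv_exponentialSum_le {s : Finset ι} {ω : ι → ℝ} {σ M : ℝ} {a : ι → E}
    (hω : ∀ j ∈ s, |ω j| ≤ σ) (hM : ∀ θ, ‖exponentialSum s ω a θ‖ ≤ M) (θ : ℝ) :
    ‖deriv (deriv (exponentialSum s ω a)) θ‖ ≤ σ ^ 2 * M := by
  set P := exponentialSum s ω a
  have hterm (n : ℕ) : ‖(-(2 * σ ^ 2 / π ^ 2) * ((-1) ^ n / (n : ℝ) ^ 2)) •
      (P (θ + n * π / σ) + P (θ - n * π / σ))‖ ≤ 4 * σ ^ 2 * M / π ^ 2 * (1 / (n : ℝ) ^ 2) :=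
    calc _ = 2 * σ ^ 2 / π ^ 2 * (1 / (n : ℝ) ^ 2) *
          ‖P (θ + n * π / σ) + P (θ - n * π / σ)‖ := by
          rw [norm_smul]
          simp
      _ ≤ 2 * σ ^ 2 / π ^ 2 * (1 / (n : ℝ) ^ 2) * (M + M) := by
          gcongr
          exact norm_add_le_of_le (hM _) (hM _)
      _ = _ := by ring
  have hsum := (hasSum_deriv_deriv_exponentialSum hω a θ).norm_le_of_bounded
    (hasSum_zeta_two.mul_left (4 * σ ^ 2 * M / π ^ 2)) hterm
  calc ‖deriv (deriv P) θ‖ = ‖(deriv (deriv P) θ + (σ ^ 2 / 3) • P θ) - (σ ^ 2 / 3) • P θ‖ := by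
        rw [add_sub_cancel_right]
    _ ≤ 4 * σ ^ 2 * M / π ^ 2 * (π ^ 2 / 6) + σ ^ 2 / 3 * M := by
        refine norm_sub_le_of_le hsum ?_
        rw [norm_smul, Real.norm_of_nonneg (by positivity)]
        gcongr
        exact hM θ
    _ = σ ^ 2 * M := by field_simp; ring

theorem norm_second_difference_exponentialSum_le {s : Finset ι} {ω : ι → ℝ} {σ M : ℝ} {a : ι → E}
    (hω : ∀ j ∈ s, |ω j| ≤ σ) (hM : ∀ θ, ‖exponentialSum s ω a θ‖ ≤ M) (θ h : ℝ) :
    ‖exponentialSum s ω a (θ + h) + exponentialSum s ω a (θ - h) -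
      (2 : ℝ) • exponentialSum s ω a θ‖ ≤ σ ^ 2 * M * h ^ 2 :=
  norm_second_difference_le (differentiable_exponentialSum s ω a)
    (deriv_exponentialSum s ω a ▸ differentiable_exponentialSum s ω _)
    (norm_deriv_deriv_exponentialSum_le hω hM) θ h

end ExponentialSum

section DegreeLowerBound

open scoped Real

theorem three_fourths_mul_le_norm_exp_sub_one {x : ℝ} (hx0 : 0 ≤ x) (hx2 : x ≤ 2) :
    3 / 4 * x ≤ ‖Complex.exp (-Complex.I * x) - 1‖ := by
  have hsin : x / 2 - (x / 2) ^ 3 / 6 ≤ Real.sin (x / 2) := Real.sin_ge_sub_cube (by positivity)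
  have hcube : (x / 2) ^ 3 ≤ x / 2 := pow_le_of_le_one (by positivity) (by linarith) three_ne_zero
  have hnorm : ‖Complex.exp (-Complex.I * x) - 1‖ = ‖2 * Real.sin (x / 2)‖ := by
    simpa [neg_div] using Complex.norm_exp_I_mul_ofReal_sub_one (-x)
  rw [hnorm]
  exact le_trans (by linarith) (Real.le_norm_self _)

theorem sq_le_pi_sq_div_four_mul_sin_sq {θ : ℝ} (hθ : |θ| ≤ π / 2) :
    θ ^ 2 ≤ π ^ 2 / 4 * Real.sin θ ^ 2 := by
  have hjordan : |2 / π * θ| ≤ |Real.sin θ| := by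
    simpa [abs_mul, abs_div, abs_of_pos Real.pi_pos] using Real.mul_abs_le_abs_sin hθ
  calc θ ^ 2 = π ^ 2 / 4 * (2 / π * θ) ^ 2 := by field_simp; ring
    _ ≤ π ^ 2 / 4 * Real.sin θ ^ 2 := by gcongr ?_ * ?_; exact sq_le_sq.mpr hjordan

variable {ι : Type*} {s : Finset ι} {ω : ι → ℝ} {a : ι → ℂ} {σ t ε : ℝ}

theorem two_div_pi_mul_sqrt_le_of_approx {θ : ℝ} (hσ : 0 ≤ σ) (hω : ∀ j ∈ s, |ω j| ≤ σ)
    (hθ : |θ| ≤ π / 2) (hε : 8 * ε ≤ t * Real.sin θ ^ 2) (ht : t * Real.sin θ ^ 2 ≤ 2)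
    (hsin : 0 < Real.sin θ ^ 2) (hbound : ∀ x, ‖exponentialSum s ω a x‖ ≤ 1)
    (happrox : ∀ x ∈ ({0, θ, -θ} : Set ℝ), ‖Complex.exp (-Complex.I * t * (Real.sin x : ℂ) ^ 2) -
      exponentialSum s ω a x‖ ≤ ε) :
    2 / π * √t ≤ σ := by
  have hε0 : 0 ≤ ε := (norm_nonneg _).trans (happrox 0 (by simp))
  have hlower : 3 / 4 * (t * Real.sin θ ^ 2) ≤
      ‖Complex.exp (-Complex.I * t * (Real.sin θ : ℂ) ^ 2) - 1‖ := by
    simpa [mul_assoc] using three_fourths_mul_le_norm_exp_sub_one (by linarith) ht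
  have hupper : ‖Complex.exp (-Complex.I * t * (Real.sin θ : ℂ) ^ 2) - 1‖ ≤
      2 * ε + σ ^ 2 * θ ^ 2 / 2 := by
    have heven := norm_sub_le_of_even_of_approx
      (f := fun x : ℝ => Complex.exp (-Complex.I * t * (Real.sin x : ℂ) ^ 2))
      (by simp) (happrox 0 (by simp))
      (happrox θ (by simp)) (happrox (-θ) (by simp))
    have hdiff := norm_second_difference_exponentialSum_le hω hbound 0 θ
    simp only [zero_add, zero_sub, mul_one] at hdiff
    simp only [Real.sin_zero, Complex.ofReal_zero, ne_eq, OfNat.ofNat_ne_zero, not_false_eq_true,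
      zero_pow, mul_zero, Complex.exp_zero] at heven
    linarith
  have hangle : σ ^ 2 * θ ^ 2 ≤ σ ^ 2 * (π ^ 2 / 4 * Real.sin θ ^ 2) := by
    gcongr
    exact sq_le_pi_sq_div_four_mul_sin_sq hθ
  have hsq : 2 ^ 2 * t ≤ (π * σ) ^ 2 := by
    refine le_of_mul_le_mul_right ?_ hsin
    linarith
  rw [div_mul_eq_mul_div, div_le_iff₀' Real.pi_pos]
  calc 2 * √t = √(2 ^ 2 * t) := by simp
    _ ≤ π * σ := Real.sqrt_le_iff.mpr ⟨by positivity, hsq⟩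

theorem trig_poly_degree_lower_bound_general {Δ : ℝ} (ht : 0 < t) (hΔ0 : 0 < Δ) (hΔ1 : Δ ≤ 1)
    (hε : 4 * ε ≤ 1) (hεΔ : 8 * ε ≤ t * Δ) (hσ : 0 ≤ σ) (hω : ∀ j ∈ s, |ω j| ≤ σ)
    (hbound : ∀ θ, ‖exponentialSum s ω a θ‖ ≤ 1)
    (happrox : ∀ θ ∈ Set.Icc (-Real.arcsin √Δ) (Real.arcsin √Δ),
      ‖Complex.exp (-Complex.I * t * (Real.sin θ : ℂ) ^ 2) - exponentialSum s ω a θ‖ ≤ ε) :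
    2 / π * √t ≤ σ := by
  -- Shrinking the interval keeps the phase `t sin² θ ≤ 2`, where `|e^{-ix} - 1| ≥ 3x/4` holds.
  set δ := min Δ (2 / t)
  have hδ0 : 0 < δ := lt_min hΔ0 (by positivity)
  have hδ1 : √δ ≤ 1 := Real.sqrt_le_one.mpr ((min_le_left _ _).trans hΔ1)
  have hθ0 : 0 ≤ Real.arcsin √δ := Real.arcsin_nonneg.mpr (Real.sqrt_nonneg δ)
  have hθΔ : Real.arcsin √δ ≤ Real.arcsin √Δ :=
    Real.monotone_arcsin (Real.sqrt_le_sqrt (min_le_left _ _))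
  have hsin : Real.sin (Real.arcsin √δ) ^ 2 = δ := by
    rw [Real.sin_arcsin (by linarith [Real.sqrt_nonneg δ]) hδ1, Real.sq_sqrt hδ0.le]
  have htδ : t * δ = min (t * Δ) 2 := by
    rw [mul_min_of_nonneg _ _ ht.le, mul_div_cancel₀ 2 ht.ne']
  have hpoints : ∀ x ∈ ({0, Real.arcsin √δ, -Real.arcsin √δ} : Set ℝ),
      ‖Complex.exp (-Complex.I * t * (Real.sin x : ℂ) ^ 2) - exponentialSum s ω a x‖ ≤ ε := by
    rintro x (rfl | rfl | rfl) <;> exact happrox _ ⟨by linarith, by linarith⟩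
  refine two_div_pi_mul_sqrt_le_of_approx hσ hω
    (abs_le.mpr ⟨Real.neg_pi_div_two_le_arcsin _, Real.arcsin_le_pi_div_two _⟩) ?_ ?_
    (hδ0.trans_eq hsin.symm) hbound hpoints
  · rw [hsin, htδ]
    exact le_min hεΔ (by linarith)
  · rw [hsin, htδ]
    exact min_le_right _ _

end DegreeLowerBound

theorem exponentialSum_intCast (s : Finset ℤ) (a : ℤ → ℂ) (θ : ℝ) :
    exponentialSum s (fun k => (k : ℝ)) a θ =
      ∑ k ∈ s, a k * Complex.exp (Complex.I * (k : ℂ) * (θ : ℂ)) := by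
  simp [exponentialSum, mul_comm (a _)]

/-- (Lower bound on the degree of trigonometric-polynomial
approximations.) Let `t > 0`, `ε > 0`, `Δ ∈ (0,1]` satisfy `1 ≥ √ε ≥ tΔ ≥ 8ε`, and set
`θ_M = arcsin √Δ`. If a trigonometric polynomial `P(θ) = Σ_{k=−K}^{K} aₖ e^{ikθ}`
satisfies `|P(θ)| ≤ 1` for all `θ` and `|e^{−it sin²θ} − P(θ)| ≤ ε` on `[−θ_M, θ_M]`,
then `K ≥ (1/π)√(2t)`. -/
theorem trig_poly_degree_lower_bound (t ε Δ : ℝ) (ht : 0 < t) (hε : 0 < ε)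
    (hΔ0 : 0 < Δ) (hΔ1 : Δ ≤ 1)
    (h1 : Real.sqrt ε ≤ 1) (h2 : t * Δ ≤ Real.sqrt ε) (h3 : 8 * ε ≤ t * Δ)
    (K : ℕ) (a : ℤ → ℂ)
    (hbound : ∀ θ : ℝ,
      ‖∑ k ∈ Finset.Icc (-(K : ℤ)) (K : ℤ),
          a k * Complex.exp (Complex.I * (k : ℂ) * (θ : ℂ))‖ ≤ 1)
    (happrox : ∀ θ ∈ Set.Icc (-Real.arcsin (Real.sqrt Δ)) (Real.arcsin (Real.sqrt Δ)),
      ‖Complex.exp (-Complex.I * (t : ℂ) * ((Real.sin θ : ℝ) : ℂ) ^ 2) -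
          ∑ k ∈ Finset.Icc (-(K : ℤ)) (K : ℤ),
            a k * Complex.exp (Complex.I * (k : ℂ) * (θ : ℂ))‖ ≤ ε) :
    (1 / Real.pi) * Real.sqrt (2 * t) ≤ (K : ℝ) := by
  simp only [← exponentialSum_intCast] at hbound happrox
  calc (1 / Real.pi) * √(2 * t) ≤ (1 / Real.pi) * √(2 ^ 2 * t) := by gcongr; norm_num
    _ = 2 / Real.pi * √t := by
      rw [Real.sqrt_mul (by positivity), Real.sqrt_sq zero_le_two]; ring
    _ ≤ K := trig_poly_degree_lower_bound_general ht hΔ0 hΔ1 (by linarith) h3 K.cast_nonneg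
      (fun k hk => by exact_mod_cast abs_le.mpr (Finset.mem_Icc.mp hk)) hbound happrox
end

section
/- Let K be a nonnegative integer and let Q(θ) = Σ_{k=−K}^{K} a_k e^{ikθ} with a_k ∈ ℂ be a trigonometric polynomial of degree at most K such that |Q(θ)| ≤ 2 for all θ ∈ ℝ. Then for every θ_M ≥ 0, |Q(θ_M)| ≤ |Q(0)| + θ_M·|Q'(0)| + K²·θ_M². -/
/-!
By Bernstein's inequality, `‖Q'‖ ≤ K * sup ‖Q‖` for a trigonometric polynomial `Q` of degree at
most `K`; applied twice it bounds `Q''` by `K ^ 2 * sup ‖Q‖`, and Taylor's formula of order one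
concludes.

Bernstein's inequality follows from the interpolation formula of M. Riesz, which writes `K * Q'(θ)`,
up to the factor `I`, as a combination of the `2 * K` values `Q(θ + t)` with `z = exp (I * t)`
running through the roots of `z ^ (2 * K) = -1`. The coefficients are `z ^ K / ‖1 - z‖ ^ 2`, and
their norms add up to `K ^ 2`.
-/

open Complex Finset

section RieszNodes

/-- The angles `t ∈ (0, 2π)` with `exp (I * t) ^ n = -1`, indexed by `j < n`. -/
noncomputable def rieszAngle (n j : ℕ) : ℝ := (2 * j + 1) * Real.pi / n

/-- The `n`-th roots of `-1`, indexed by `j < n`: the nodes of Riesz's interpolation formula. -/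
noncomputable def rieszNode (n j : ℕ) : ℂ := exp (I * rieszAngle n j)

/-- The absolute values of the coefficients in Riesz's interpolation formula. -/
noncomputable def rieszWeight (n j : ℕ) : ℝ := (normSq (1 - rieszNode n j))⁻¹

variable {n : ℕ} (j : ℕ)

lemma rieszNode_ne_zero : rieszNode n j ≠ 0 := exp_ne_zero _

lemma norm_rieszNode : ‖rieszNode n j‖ = 1 := norm_exp_I_mul_ofReal _

lemma rieszNode_pow_self (hn : n ≠ 0) : rieszNode n j ^ n = -1 := by
  have hangle : n * (I * rieszAngle n j) = Real.pi * I + j * (2 * Real.pi * I) := by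
    have : (n : ℂ) ≠ 0 := mod_cast hn
    rw [rieszAngle]
    push_cast
    field_simp
    ring
  rw [rieszNode, ← exp_nat_mul, hangle, exp_add, exp_pi_mul_I, exp_nat_mul_two_pi_mul_I, mul_one]

lemma rieszNode_ne_one (hn : n ≠ 0) : rieszNode n j ≠ 1 := by
  intro h
  have := rieszNode_pow_self j hn
  norm_num [h] at this

lemma rieszNode_eq_mul_pow : rieszNode n j = rieszNode n 0 * exp (2 * Real.pi * I / n) ^ j := by
  simp only [rieszNode, rieszAngle, ← exp_nat_mul, ← exp_add]
  congr 1
  push_cast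
  ring

lemma sum_rieszNode_zpow_eq_zero {m : ℤ} (hm : ¬ (n : ℤ) ∣ m) :
    ∑ j ∈ range n, rieszNode n j ^ m = 0 := by
  rcases eq_or_ne n 0 with rfl | hn
  · simp
  set ω := exp (2 * Real.pi * I / n)
  have hω : IsPrimitiveRoot ω n := isPrimitiveRoot_exp n hn
  have hωm : ω ^ m ≠ 1 := mt (hω.zpow_eq_one_iff_dvd m).1 hm
  have hωmn : (ω ^ m) ^ n = 1 := by
    rw [← zpow_natCast, ← zpow_mul, mul_comm, zpow_mul, zpow_natCast, hω.pow_eq_one, one_zpow]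
  have hterm (j : ℕ) : rieszNode n j ^ m = rieszNode n 0 ^ m * (ω ^ m) ^ j := by
    rw [rieszNode_eq_mul_pow, mul_zpow, ← zpow_natCast, ← zpow_natCast, zpow_comm]
  rw [sum_congr rfl fun j _ ↦ hterm j, ← mul_sum, geom_sum_eq hωm, hωmn,
    sub_self, zero_div, mul_zero]

lemma rieszWeight_nonneg : 0 ≤ rieszWeight n j := inv_nonneg.2 (normSq_nonneg _)

-- Both sides equal `1 / (1 - z⁻¹)` where `z` is the node, because `z⁻¹` is the conjugate of `z` and
-- `(z⁻¹) ^ n = -1`.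
lemma rieszWeight_mul_one_sub (hn : n ≠ 0) :
    rieszWeight n j * (1 - rieszNode n j) = (∑ m ∈ range n, (rieszNode n j)⁻¹ ^ m) / 2 := by
  set z := rieszNode n j with hz
  have hz1 : 1 - z ≠ 0 := sub_ne_zero.2 (rieszNode_ne_one j hn).symm
  have hzinv : 1 - z⁻¹ ≠ 0 := sub_ne_zero.2 (inv_ne_one.2 (rieszNode_ne_one j hn)).symm
  have hnormSq : (normSq (1 - z) : ℂ) = (1 - z) * (1 - z⁻¹) := by
    rw [← mul_conj, map_sub, map_one, inv_eq_conj (norm_rieszNode j)]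
  have hgeom : (1 - z⁻¹) * ∑ m ∈ range n, z⁻¹ ^ m = 2 := by
    rw [mul_neg_geom_sum, inv_pow, rieszNode_pow_self j hn]
    norm_num
  rw [rieszWeight, ← hz, ofReal_inv, hnormSq, eq_div_of_mul_eq hzinv ((mul_comm _ _).trans hgeom)]
  field_simp

lemma sum_rieszWeight_mul_pow_sub {p : ℕ} (hp : p < n) :
    ∑ j ∈ range n, (rieszWeight n j : ℂ) * rieszNode n j ^ p
      - ∑ j ∈ range n, (rieszWeight n j : ℂ) * rieszNode n j ^ (p + 1) = n / 2 := by
  have hn : n ≠ 0 := by omega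
  have hterm (j : ℕ) : (rieszWeight n j : ℂ) * rieszNode n j ^ p
      - rieszWeight n j * rieszNode n j ^ (p + 1)
      = (∑ m ∈ range n, rieszNode n j ^ ((p : ℤ) - m)) / 2 := by
    have hpow (m : ℕ) : rieszNode n j ^ ((p : ℤ) - m)
        = rieszNode n j ^ p * (rieszNode n j)⁻¹ ^ m := by
      rw [zpow_sub₀ (rieszNode_ne_zero j), zpow_natCast, zpow_natCast, inv_pow, div_eq_mul_inv]
    simp only [hpow]
    rw [← mul_sum]
    linear_combination rieszNode n j ^ p * rieszWeight_mul_one_sub j hn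
  rw [← sum_sub_distrib, sum_congr rfl fun j _ ↦ hterm j, ← sum_div, sum_comm,
    sum_eq_single_of_mem p (mem_range.2 hp)]
  · simp
  · intro m hm hmp
    refine sum_rieszNode_zpow_eq_zero fun hdvd ↦ hmp ?_
    have hlt : |(p : ℤ) - m| < n := by grind
    have := Int.eq_zero_of_abs_lt_dvd hdvd hlt
    omega

-- The moments are affine in `p` for `p ≤ n`, and those for `p = 0` and `p = n` are opposite.
lemma sum_rieszWeight_mul_pow {p : ℕ} (hp : p ≤ n) :
    ∑ j ∈ range n, (rieszWeight n j : ℂ) * rieszNode n j ^ p = n * (n - 2 * p) / 4 := by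
  rcases eq_or_ne n 0 with rfl | hn
  · simp
  set D : ℕ → ℂ := fun p ↦ ∑ j ∈ range n, (rieszWeight n j : ℂ) * rieszNode n j ^ p with hD
  have haffine (p : ℕ) (hp : p ≤ n) : D p = D 0 - p * (n / 2) := by
    induction p with
    | zero => simp
    | succ p ih =>
      push_cast
      linear_combination ih (by omega) - sum_rieszWeight_mul_pow_sub hp
  have hantiperiodic : D n = -D 0 := by
    simp only [hD, rieszNode_pow_self _ hn, pow_zero, mul_neg, sum_neg_distrib]
  change D p = _
  linear_combination haffine p hp + (hantiperiodic - haffine n le_rfl) / 2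

lemma sum_rieszWeight : ∑ j ∈ range n, rieszWeight n j = (n : ℝ) ^ 2 / 4 := by
  apply ofReal_injective
  push_cast
  simpa [sq] using sum_rieszWeight_mul_pow n.zero_le

end RieszNodes

section TrigPoly

variable {E : Type*} [NormedAddCommGroup E] [NormedSpace ℂ E]

/-- The trigonometric polynomial of degree at most `K` with vector coefficients `a k`, read off from
a sequence indexed by all of `ℤ`, of which only the terms with `-K ≤ k ≤ K` enter. -/
noncomputable def trigPoly (K : ℕ) (a : ℤ → E) (θ : ℝ) : E :=
  ∑ k ∈ Icc (-(K : ℤ)) K, exp (I * k * θ) • a k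

variable {K : ℕ} {a : ℤ → E}

lemma hasDerivAt_trigPoly (θ : ℝ) :
    HasDerivAt (trigPoly K a) (trigPoly K (fun k ↦ (I * k) • a k) θ) θ := by
  refine HasDerivAt.fun_sum fun k _ ↦ ?_
  have hlin : HasDerivAt (fun θ : ℝ ↦ I * k * (θ : ℂ)) (I * k) θ := by
    simpa using (hasDerivAt_id θ).ofReal_comp.const_mul (I * k)
  simpa only [smul_smul] using hlin.cexp.smul_const (a k)

lemma deriv_trigPoly : deriv (trigPoly K a) = trigPoly K fun k ↦ (I * k) • a k :=
  funext fun θ ↦ (hasDerivAt_trigPoly θ).deriv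

lemma differentiable_trigPoly : Differentiable ℝ (trigPoly K a) :=
  fun θ ↦ (hasDerivAt_trigPoly θ).differentiableAt

lemma rieszNode_pow_mul_exp {n p : ℕ} {k : ℤ} (hp : (p : ℤ) = K + k) (j : ℕ) (θ : ℝ) :
    rieszNode n j ^ K * exp (I * k * (θ + rieszAngle n j : ℝ))
      = rieszNode n j ^ p * exp (I * k * θ) := by
  have hpc : (p : ℂ) = K + k := mod_cast hp
  simp only [rieszNode, ← exp_nat_mul, ← exp_add, hpc]
  congr 1
  push_cast
  ring

theorem riesz_interpolation (θ : ℝ) :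
    ∑ j ∈ range (2 * K), ((rieszWeight (2 * K) j : ℂ) * rieszNode (2 * K) j ^ K) •
      trigPoly K a (θ + rieszAngle (2 * K) j) = (I * K) • deriv (trigPoly K a) θ := by
  simp only [deriv_trigPoly, trigPoly, smul_sum, smul_smul]
  rw [sum_comm]
  refine sum_congr rfl fun k hk ↦ ?_
  rw [← sum_smul]
  congr 1
  rw [mem_Icc] at hk
  obtain ⟨p, hp⟩ := Int.eq_ofNat_of_zero_le (show 0 ≤ K + k by omega)
  have hpc : (p : ℂ) = K + k := mod_cast hp.symm
  have hmoment := sum_rieszWeight_mul_pow (show p ≤ 2 * K by omega)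
  calc ∑ j ∈ range (2 * K), (rieszWeight (2 * K) j : ℂ) * rieszNode (2 * K) j ^ K
          * exp (I * k * (θ + rieszAngle (2 * K) j : ℝ))
      = (∑ j ∈ range (2 * K), (rieszWeight (2 * K) j : ℂ) * rieszNode (2 * K) j ^ p)
          * exp (I * k * θ) := by
        rw [sum_mul]
        refine sum_congr rfl fun j _ ↦ ?_
        rw [mul_assoc, rieszNode_pow_mul_exp hp.symm, ← mul_assoc]
    _ = -(K * k) * exp (I * k * θ) := by
        rw [hmoment, hpc]
        push_cast
        ring
    _ = I * K * (exp (I * k * θ) * (I * k)) := by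
        linear_combination -(K * k * exp (I * k * θ)) * I_sq

theorem norm_deriv_trigPoly_le {M : ℝ} (hM : ∀ θ, ‖trigPoly K a θ‖ ≤ M) (θ : ℝ) :
    ‖deriv (trigPoly K a) θ‖ ≤ K * M := by
  rcases K.eq_zero_or_pos with rfl | hK
  · simp [deriv_trigPoly, trigPoly]
  have hbound : K * ‖deriv (trigPoly K a) θ‖ ≤ K * (K * M) :=
    calc K * ‖deriv (trigPoly K a) θ‖
        = ‖∑ j ∈ range (2 * K), ((rieszWeight (2 * K) j : ℂ) * rieszNode (2 * K) j ^ K) •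
            trigPoly K a (θ + rieszAngle (2 * K) j)‖ := by
          rw [riesz_interpolation, norm_smul, norm_mul, norm_I, one_mul, norm_natCast]
      _ ≤ ∑ j ∈ range (2 * K), rieszWeight (2 * K) j * M := by
          refine norm_sum_le_of_le _ fun j _ ↦ ?_
          rw [norm_smul, norm_mul, norm_pow, norm_rieszNode, one_pow, mul_one, norm_real,
            Real.norm_of_nonneg (rieszWeight_nonneg j)]
          exact mul_le_mul_of_nonneg_left (hM _) (rieszWeight_nonneg j)
      _ = K * (K * M) := by
          rw [← sum_mul, sum_rieszWeight]
          push_cast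
          ring
  exact le_of_mul_le_mul_left hbound (mod_cast hK)

end TrigPoly

open scoped Interval in
theorem norm_sub_sub_smul_le_of_norm_deriv_sub_le {F : Type*} [NormedAddCommGroup F]
    [NormedSpace ℝ F] {f f' : ℝ → F} {C x y : ℝ} (hf : ∀ z ∈ [[x, y]], HasDerivAt f (f' z) z)
    (hC : ∀ z ∈ [[x, y]], ‖f' z - f' x‖ ≤ C * |z - x|) :
    ‖f y - f x - (y - x) • f' x‖ ≤ C / 2 * (y - x) ^ 2 := by
  let u : ℝ → ℝ := fun t ↦ x + t * (y - x)
  have hu (t : ℝ) (ht : t ∈ Set.Icc (0 : ℝ) 1) : u t ∈ [[x, y]] := by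
    rw [← segment_eq_uIcc, segment_eq_image']
    exact ⟨t, ht, rfl⟩
  have hu' (t : ℝ) : HasDerivAt u (y - x) t :=
    (((hasDerivAt_id' t).mul_const (y - x)).const_add x).congr_deriv (one_mul _)
  have hg (t : ℝ) (ht : t ∈ Set.Icc (0 : ℝ) 1) :
      HasDerivAt (fun t ↦ f (u t) - f x - t • (y - x) • f' x) ((y - x) • (f' (u t) - f' x)) t := by
    simpa [smul_sub] using (((hf _ (hu t ht)).scomp t (hu' t)).sub_const (f x)).fun_sub
      ((hasDerivAt_id' t).smul_const ((y - x) • f' x))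
  have hB (t : ℝ) :
      HasDerivAt (fun t ↦ C / 2 * (y - x) ^ 2 * t ^ 2) (C * (y - x) ^ 2 * t) t :=
    ((hasDerivAt_pow 2 t).const_mul _).congr_deriv (by push_cast; ring)
  have hg_le (t : ℝ) (ht : t ∈ Set.Icc (0 : ℝ) 1) :
      ‖(y - x) • (f' (u t) - f' x)‖ ≤ C * (y - x) ^ 2 * t :=
    calc ‖(y - x) • (f' (u t) - f' x)‖ ≤ |y - x| * (C * |u t - x|) := by
          rw [norm_smul, Real.norm_eq_abs]
          exact mul_le_mul_of_nonneg_left (hC _ (hu t ht)) (abs_nonneg _)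
      _ = C * (y - x) ^ 2 * t := by
          rw [add_sub_cancel_left, abs_mul, abs_of_nonneg ht.1, ← sq_abs (y - x)]
          ring
  simpa [u] using image_norm_le_of_norm_deriv_right_le_deriv_boundary
    (fun t ht ↦ (hg t ht).continuousAt.continuousWithinAt)
    (fun t ht ↦ (hg t (Set.Ico_subset_Icc_self ht)).hasDerivWithinAt) (by simp [u]) hB
    (fun t ht ↦ hg_le t (Set.Ico_subset_Icc_self ht)) (Set.right_mem_Icc.2 zero_le_one)

theorem trig_poly_taylor_bound_general {E : Type*} [NormedAddCommGroup E] [NormedSpace ℂ E]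
    {K : ℕ} {a : ℤ → E} {M : ℝ} (hM : ∀ θ, ‖trigPoly K a θ‖ ≤ M) (x y : ℝ) :
    ‖trigPoly K a y‖ ≤ ‖trigPoly K a x‖ + |y - x| * ‖deriv (trigPoly K a) x‖
      + K ^ 2 * M / 2 * (y - x) ^ 2 := by
  set Q := trigPoly K a
  have hQ' : Differentiable ℝ (deriv Q) := deriv_trigPoly (a := a) ▸ differentiable_trigPoly
  have hQ'' (z : ℝ) : ‖deriv (deriv Q) z‖ ≤ K * (K * M) := by
    have hbernstein := norm_deriv_trigPoly_le hM
    rw [deriv_trigPoly] at hbernstein ⊢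
    exact norm_deriv_trigPoly_le hbernstein z
  have htaylor : ‖Q y - Q x - (y - x) • deriv Q x‖ ≤ K * (K * M) / 2 * (y - x) ^ 2 :=
    norm_sub_sub_smul_le_of_norm_deriv_sub_le
      (fun z _ ↦ (differentiable_trigPoly z).hasDerivAt) fun z _ ↦
        convex_univ.norm_image_sub_le_of_norm_deriv_le (fun w _ ↦ hQ' w) (fun w _ ↦ hQ'' w)
          trivial trivial
  calc ‖Q y‖ = ‖Q x + (y - x) • deriv Q x + (Q y - Q x - (y - x) • deriv Q x)‖ := by
        congr 1
        abel
    _ ≤ ‖Q x‖ + ‖(y - x) • deriv Q x‖ + ‖Q y - Q x - (y - x) • deriv Q x‖ := norm_add₃_le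
    _ ≤ ‖Q x‖ + |y - x| * ‖deriv Q x‖ + K ^ 2 * M / 2 * (y - x) ^ 2 := by
        rw [norm_smul, Real.norm_eq_abs]
        linarith

/-- If `Q(θ) = Σ_{k=−K}^{K} aₖ e^{ikθ}` is a trigonometric polynomial
of degree at most `K` with `|Q(θ)| ≤ 2` for all real `θ`, then for every `θ_M ≥ 0`,
`|Q(θ_M)| ≤ |Q(0)| + θ_M·|Q'(0)| + K²·θ_M²`. -/
theorem trig_poly_taylor_bound (K : ℕ) (a : ℤ → ℂ) :
    let Q : ℝ → ℂ := fun θ =>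
      ∑ k ∈ Finset.Icc (-(K : ℤ)) (K : ℤ), a k * Complex.exp (Complex.I * (k : ℂ) * (θ : ℂ))
    (∀ θ : ℝ, ‖Q θ‖ ≤ 2) →
    ∀ θM : ℝ, 0 ≤ θM →
      ‖Q θM‖ ≤ ‖Q 0‖ + θM * ‖deriv Q 0‖ + (K : ℝ) ^ 2 * θM ^ 2 := by
  intro Q hQ θM hθM
  have hQ_eq : Q = trigPoly K a := by
    funext θ
    simp only [Q, trigPoly, smul_eq_mul, mul_comm]
  rw [hQ_eq] at hQ ⊢
  simpa [abs_of_nonneg hθM] using trig_poly_taylor_bound_general hQ 0 θM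
end
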